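/- arXiv:1305.2043 — 3 statements merged into one kernel-verified Lean document; each statement's English description precedes it below -/
import Mathlib

section
/- Let d ≥ 1, α ∈ (0,2), T > 0, and let Ψ̃_T(u) = ∫_{|r| ≤ T^{−1/α}} (1 − cos(⟨u,r⟩)) |r|^{−(d+α)} dr for u ∈ ℝ^d. Then there exist constants 0 < c₁ ≤ c₂ < ∞ (depending only on d, α, T) such that c₁ |u|^α ≤ Ψ̃_T(u) ≤ c₂ |u|^α for all u ∈ ℝ^d with |u| ≥ 1. -/
open MeasureTheory Metric
open scoped RealInnerProductSpace

lemma aux_integrable (d : ℕ) (hd : 1 ≤ d) (α : ℝ) (hα : 0 < α) (hα2 : α < 2) :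
    Integrable (fun x : EuclideanSpace ℝ (Fin d) =>
      min 2 (‖x‖ ^ 2 / 2) / ‖x‖ ^ ((d : ℝ) + α)) := by
  haveI : Nonempty (Fin d) := ⟨⟨0, hd⟩⟩
  haveI : Nontrivial (EuclideanSpace ℝ (Fin d)) := inferInstance
  have h := integrable_fun_norm_addHaar (volume : Measure (EuclideanSpace ℝ (Fin d)))
    (f := fun y : ℝ => min 2 (y ^ 2 / 2) / y ^ ((d : ℝ) + α))
  refine h.2 ?_
  simp only [finrank_euclideanSpace, Fintype.card_fin, smul_eq_mul]
  have key : ∀ y : ℝ, 0 < y → y ^ (d - 1) * (min 2 (y ^ 2 / 2) / y ^ ((d : ℝ) + α))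
      = min 2 (y ^ 2 / 2) * y ^ (-1 - α) := by
    intro y hy
    rw [← Real.rpow_natCast y (d - 1), Nat.cast_sub hd, mul_div_assoc', mul_comm, mul_div_assoc,
      ← Real.rpow_sub hy]
    congr 2
    push_cast
    ring
  have hm : Measurable (fun y : ℝ => y ^ (d - 1) * (min 2 (y ^ 2 / 2) / y ^ ((d : ℝ) + α))) := by
    fun_prop
  rw [← Set.Ioc_union_Ioi_eq_Ioi (zero_le_one' ℝ)]
  refine IntegrableOn.union ?_ ?_
  · have hi : IntegrableOn (fun y : ℝ => y ^ (1 - α)) (Set.Ioc 0 1) := by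
      rw [← intervalIntegrable_iff_integrableOn_Ioc_of_le zero_le_one]
      exact intervalIntegral.intervalIntegrable_rpow' (by linarith)
    refine Integrable.mono' hi hm.aestronglyMeasurable ?_
    refine (ae_restrict_iff' measurableSet_Ioc).2 (Filter.Eventually.of_forall ?_)
    intro y hy
    have hy0 : 0 < y := hy.1
    rw [key y hy0, Real.norm_of_nonneg (by positivity)]
    calc min 2 (y ^ 2 / 2) * y ^ (-1 - α) ≤ y ^ 2 * y ^ (-1 - α) := by
          gcongr
          exact (min_le_right _ _).trans (by nlinarith [sq_nonneg y])
      _ = y ^ (1 - α) := by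
          rw [← Real.rpow_natCast y 2, ← Real.rpow_add hy0]
          congr 1
          push_cast
          ring
  · have hi : IntegrableOn (fun y : ℝ => 2 * y ^ (-1 - α)) (Set.Ioi 1) :=
      (integrableOn_Ioi_rpow_of_lt (by linarith) one_pos).const_mul 2
    refine Integrable.mono' hi hm.aestronglyMeasurable ?_
    refine (ae_restrict_iff' measurableSet_Ioi).2 (Filter.Eventually.of_forall ?_)
    intro y hy
    have hy0 : 0 < y := one_pos.trans hy
    rw [key y hy0, Real.norm_of_nonneg (by positivity)]
    gcongr
    exact min_le_left _ _

lemma aux_le (d : ℕ) (α : ℝ) (e : EuclideanSpace ℝ (Fin d)) (he : ‖e‖ = 1)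
    (x : EuclideanSpace ℝ (Fin d)) :
    (1 - Real.cos ⟪e, x⟫) / ‖x‖ ^ ((d : ℝ) + α) ≤
      min 2 (‖x‖ ^ 2 / 2) / ‖x‖ ^ ((d : ℝ) + α) := by
  gcongr
  refine le_min (by linarith [Real.neg_one_le_cos ⟪e, x⟫]) ?_
  have h1 := Real.one_sub_sq_div_two_le_cos (x := ⟪e, x⟫)
  have h2 : ⟪e, x⟫ ^ 2 ≤ ‖x‖ ^ 2 := by
    have h := abs_real_inner_le_norm e x
    rw [he, one_mul] at h
    exact sq_le_sq' (by linarith [neg_le_of_abs_le h]) (le_of_abs_le h)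
  linarith

lemma aux_nonneg (d : ℕ) (α : ℝ) (e x : EuclideanSpace ℝ (Fin d)) :
    0 ≤ (1 - Real.cos ⟪e, x⟫) / ‖x‖ ^ ((d : ℝ) + α) :=
  div_nonneg (by linarith [Real.cos_le_one ⟪e, x⟫]) (by positivity)

lemma aux_int (d : ℕ) (hd : 1 ≤ d) (α : ℝ) (hα : 0 < α) (hα2 : α < 2)
    (e : EuclideanSpace ℝ (Fin d)) (he : ‖e‖ = 1) :
    Integrable (fun x : EuclideanSpace ℝ (Fin d) =>
      (1 - Real.cos ⟪e, x⟫) / ‖x‖ ^ ((d : ℝ) + α)) := by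
  refine (aux_integrable d hd α hα hα2).mono' ?_ (Filter.Eventually.of_forall fun x => ?_)
  · apply Measurable.aestronglyMeasurable
    fun_prop
  · rw [Real.norm_of_nonneg (aux_nonneg d α e x)]
    exact aux_le d α e he x

lemma aux_scale (d : ℕ) (α R : ℝ) (hR : 0 ≤ R) (u : EuclideanSpace ℝ (Fin d)) (hu : 0 < ‖u‖) :
    ∫ r in closedBall (0 : EuclideanSpace ℝ (Fin d)) R,
        (1 - Real.cos ⟪u, r⟫) / ‖r‖ ^ ((d : ℝ) + α) =
    (∫ r in closedBall (0 : EuclideanSpace ℝ (Fin d)) (‖u‖ * R),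
        (1 - Real.cos ⟪‖u‖⁻¹ • u, r⟫) / ‖r‖ ^ ((d : ℝ) + α)) * ‖u‖ ^ α := by
  have h := Measure.setIntegral_comp_smul_of_pos (volume : Measure (EuclideanSpace ℝ (Fin d)))
    (fun r => (1 - Real.cos ⟪‖u‖⁻¹ • u, r⟫) / ‖r‖ ^ ((d : ℝ) + α)) (closedBall 0 R) hu
  rw [smul_closedBall _ _ hR, smul_zero, norm_norm, finrank_euclideanSpace, Fintype.card_fin,
    smul_eq_mul] at h
  have h2 : ∀ x : EuclideanSpace ℝ (Fin d),
      (1 - Real.cos ⟪‖u‖⁻¹ • u, ‖u‖ • x⟫) / ‖‖u‖ • x‖ ^ ((d : ℝ) + α) =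
      (‖u‖ ^ ((d : ℝ) + α))⁻¹ * ((1 - Real.cos ⟪u, x⟫) / ‖x‖ ^ ((d : ℝ) + α)) := by
    intro x
    rw [real_inner_smul_left, real_inner_smul_right, inv_mul_cancel_left₀ hu.ne', norm_smul,
      norm_norm, Real.mul_rpow hu.le (norm_nonneg x)]
    ring
  simp_rw [h2] at h
  rw [integral_const_mul, Real.rpow_add hu, Real.rpow_natCast] at h
  have h3 : ‖u‖ ^ d ≠ 0 := by positivity
  have h4 : ‖u‖ ^ α ≠ 0 := by positivity
  field_simp at h
  rw [h]
  ring

/-- Two-sided bound `c₁|u|^α ≤ Ψ̃_T(u) ≤ c₂|u|^α` for `|u| ≥ 1`. -/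
theorem stmt_1 (d : ℕ) (hd : 1 ≤ d) (α : ℝ) (hα : 0 < α) (hα2 : α < 2)
    (T : ℝ) (hT : 0 < T)
    (Ψt : EuclideanSpace ℝ (Fin d) → ℝ)
    (hΨt : ∀ u, Ψt u =
      ∫ r in Metric.closedBall (0 : EuclideanSpace ℝ (Fin d)) (T ^ (-(1 / α))),
        (1 - Real.cos ⟪u, r⟫) / ‖r‖ ^ ((d : ℝ) + α)) :
    ∃ c₁ c₂ : ℝ, 0 < c₁ ∧ c₁ ≤ c₂ ∧
      ∀ u : EuclideanSpace ℝ (Fin d), 1 ≤ ‖u‖ →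
        c₁ * ‖u‖ ^ α ≤ Ψt u ∧ Ψt u ≤ c₂ * ‖u‖ ^ α := by
  have hR : 0 < T ^ (-(1 / α)) := by positivity
  generalize T ^ (-(1 / α)) = R at hΨt hR
  obtain ⟨ρ, hρ0, hρR, hρ1⟩ : ∃ ρ : ℝ, 0 < ρ ∧ ρ ≤ R ∧ ρ ≤ 1 :=
    ⟨min R 1, lt_min hR one_pos, min_le_left _ _, min_le_right _ _⟩
  set V : ℝ := volume.real (closedBall (0 : EuclideanSpace ℝ (Fin d)) (ρ / 4)) with hV
  have hVpos : 0 < V := by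
    rw [hV, Measure.real, ENNReal.toReal_pos_iff]
    exact ⟨measure_closedBall_pos _ _ (by positivity), measure_closedBall_lt_top⟩
  set m : ℝ := 2 / Real.pi ^ 2 * (ρ / 4) ^ 2 / ρ ^ ((d : ℝ) + α) with hm
  have hmpos : 0 < m := by positivity
  set C : ℝ := ∫ x : EuclideanSpace ℝ (Fin d), min 2 (‖x‖ ^ 2 / 2) / ‖x‖ ^ ((d : ℝ) + α) with hC
  refine ⟨V * m, max (V * m) C, by positivity, le_max_left _ _, fun u hu => ?_⟩
  have hu0 : 0 < ‖u‖ := by linarith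
  rw [hΨt, aux_scale d α R hR.le u hu0]
  have he : ‖‖u‖⁻¹ • u‖ = 1 := by
    rw [norm_smul, norm_inv, norm_norm, inv_mul_cancel₀ hu0.ne']
  generalize ‖u‖⁻¹ • u = e at he
  have hint := aux_int d hd α hα hα2 e he
  constructor
  · gcongr
    have hmem : ∀ x ∈ closedBall ((ρ / 2) • e) (ρ / 4),
        ρ / 4 ≤ ⟪e, x⟫ ∧ ρ / 4 ≤ ‖x‖ ∧ ‖x‖ ≤ ρ := by
      intro x hx
      rw [mem_closedBall, dist_eq_norm] at hx
      have h1 : ‖(ρ / 2) • e‖ = ρ / 2 := by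
        rw [norm_smul, he, mul_one, Real.norm_of_nonneg (by positivity)]
      have h2 : ⟪e, x⟫ = ⟪e, x - (ρ / 2) • e⟫ + ρ / 2 := by
        rw [inner_sub_right, real_inner_smul_right, real_inner_self_eq_norm_sq, he]
        ring
      have h3 := abs_real_inner_le_norm e (x - (ρ / 2) • e)
      rw [he, one_mul] at h3
      have h4 := neg_le_of_abs_le h3
      have h5 := norm_sub_norm_le x ((ρ / 2) • e)
      have h6 := real_inner_le_norm e x
      rw [he, one_mul] at h6
      refine ⟨by linarith, by linarith, by linarith⟩
    calc V * m = ∫ x in closedBall ((ρ / 2) • e) (ρ / 4), m := by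
          rw [setIntegral_const, smul_eq_mul, hV, Measure.real, Measure.real,
            Measure.addHaar_closedBall_center volume ((ρ / 2) • e)]
      _ ≤ ∫ x in closedBall ((ρ / 2) • e) (ρ / 4),
            (1 - Real.cos ⟪e, x⟫) / ‖x‖ ^ ((d : ℝ) + α) := by
          refine setIntegral_mono_on ?_ hint.integrableOn measurableSet_closedBall ?_
          · exact integrableOn_const measure_closedBall_lt_top.ne
          · intro x hx
            obtain ⟨h1, h2, h3⟩ := hmem x hx
            have hx0 : 0 < ‖x‖ := by linarith
            have h6 := real_inner_le_norm e x
            rw [he, one_mul] at h6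
            have h7 : |⟪e, x⟫| ≤ Real.pi := by
              rw [abs_of_nonneg (by linarith)]
              linarith [Real.pi_gt_three]
            have h8 := Real.cos_le_one_sub_mul_cos_sq h7
            rw [hm]
            have h9 : 2 / Real.pi ^ 2 * (ρ / 4) ^ 2 ≤ 2 / Real.pi ^ 2 * ⟪e, x⟫ ^ 2 := by
              gcongr
            apply div_le_div₀
            · linarith [Real.cos_le_one ⟪e, x⟫]
            · linarith
            · positivity
            · gcongr
      _ ≤ _ := by
          refine setIntegral_mono_set hint.integrableOn
            (Filter.Eventually.of_forall fun x => aux_nonneg d α e x)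
            (Filter.Eventually.of_forall fun x hx => ?_)
          obtain ⟨h1, h2, h3⟩ := hmem x hx
          change x ∈ closedBall _ _
          rw [mem_closedBall_zero_iff]
          nlinarith
  · gcongr
    refine le_trans ?_ (le_max_right _ _)
    refine (setIntegral_le_integral hint
      (Filter.Eventually.of_forall fun x => aux_nonneg d α e x)).trans ?_
    exact integral_mono hint (aux_integrable d hd α hα hα2) (aux_le d α e he)
end

section
/- Let d ≥ 2, α ∈ (1,2), T > 0, and for 0 < t ≤ T define p_t(x) = (2π)^{−d} ∫_{ℝ^d} cos(⟨x,u⟩) e^{−tΨ(u)} du, where Ψ(u) = ∫_{|y|≤1} (1 − cos(⟨u,y⟩)) |y|^{−(d+α)} dy. Then for each 0 < t ≤ T the function p_t is continuously differentiable, each partial derivative ∂p_t/∂x_i belongs to L¹(ℝ^d), and there exists a constant C < ∞ (depending only on d, α, T) such that ‖∂p_t/∂x_i‖_{L¹(ℝ^d)} ≤ C t^{−1/α} for all 0 < t ≤ T and all i = 1,…,d. -/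
open MeasureTheory Metric
open scoped RealInnerProductSpace

set_option linter.unusedSectionVars false

/-- Characteristic exponent of the truncated `α`-stable process. -/
noncomputable def Psi (d : ℕ) (α : ℝ) (u : EuclideanSpace ℝ (Fin d)) : ℝ :=
  ∫ y in Metric.closedBall (0 : EuclideanSpace ℝ (Fin d)) 1,
    (1 - Real.cos ⟪u, y⟫) / ‖y‖ ^ ((d : ℝ) + α)

/-- Transition density of the truncated `α`-stable process, via Fourier inversion. -/
noncomputable def pdens (d : ℕ) (α : ℝ) (t : ℝ) (x : EuclideanSpace ℝ (Fin d)) : ℝ :=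
  ((2 * Real.pi) ^ d)⁻¹ *
    ∫ u : EuclideanSpace ℝ (Fin d), Real.cos ⟪x, u⟫ * Real.exp (-t * Psi d α u)


section CompoundPoisson
variable {E : Type*} [NormedAddCommGroup E] [InnerProductSpace ℝ E] [MeasurableSpace E]
  [BorelSpace E] [SecondCountableTopology E]

/-- Convolution powers of a measure. -/
noncomputable def convPow (ν : Measure E) : ℕ → Measure E
  | 0 => Measure.dirac 0
  | n + 1 => Measure.conv ν (convPow ν n)

lemma convPow_finite (ν : Measure E) [IsFiniteMeasure ν] (n : ℕ) :
    IsFiniteMeasure (convPow ν n) := by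
  induction n with
  | zero => rw [convPow]; infer_instance
  | succ k ih => rw [convPow]; infer_instance

lemma charFun_convPow (ν : Measure E) [IsFiniteMeasure ν] (n : ℕ) (u : E) :
    charFun (convPow ν n) u = charFun ν u ^ n := by
  induction n with
  | zero => simp [convPow]
  | succ k ih =>
    have := convPow_finite ν k
    rw [convPow, charFun_conv, ih, pow_succ']

lemma convPow_univ (ν : Measure E) [IsFiniteMeasure ν] (n : ℕ) :
    (convPow ν n).real Set.univ = ν.real Set.univ ^ n := by
  have := charFun_convPow ν n 0
  rw [charFun_zero, charFun_zero] at this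
  exact_mod_cast this

/-- Existence of the compound Poisson law. -/
lemma exists_compoundPoisson (ν : Measure E) [IsFiniteMeasure ν] :
    ∃ μ : Measure E, IsProbabilityMeasure μ ∧
      ∀ u, charFun μ u = Complex.exp (charFun ν u - ν.real Set.univ) := by
  set m := ν.real Set.univ with hm
  let c : ℕ → ℝ := fun n => Real.exp (-m) / n.factorial
  have hc : ∀ n, 0 ≤ c n := fun n => by positivity
  let M : ℕ → Measure E := fun n => ENNReal.ofReal (c n) • convPow ν n
  have hMfin : ∀ n, IsFiniteMeasure (convPow ν n) := convPow_finite ν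
  have hexp : HasSum (fun n => c n * m ^ n) 1 := by
    have h := (NormedSpace.expSeries_div_hasSum_exp (m : ℝ)).mul_left (Real.exp (-m))
    rw [← Real.exp_eq_exp_ℝ, ← Real.exp_add] at h
    rw [neg_add_cancel, Real.exp_zero] at h
    refine (congrArg (fun g => HasSum g _) (funext fun n => ?_)).mpr h
    simp only [c]; ring
  have hprob : IsProbabilityMeasure (Measure.sum M) := by
    constructor
    rw [Measure.sum_apply _ MeasurableSet.univ]
    have : ∀ n, M n Set.univ = ENNReal.ofReal (c n * m ^ n) := by
      intro n
      simp only [M, Measure.smul_apply, smul_eq_mul]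
      rw [ENNReal.ofReal_mul (hc n), hm, ← convPow_univ, ofReal_measureReal]
    simp_rw [this]
    rw [← ENNReal.ofReal_tsum_of_nonneg (fun n => by have := hc n; positivity) hexp.summable,
      hexp.tsum_eq, ENNReal.ofReal_one]
  refine ⟨Measure.sum M, hprob, fun u => ?_⟩
  have hIntg : Integrable (fun x : E => Complex.exp (⟪x, u⟫ * Complex.I)) (Measure.sum M) := by
    refine Integrable.of_bound (C := 1) (by fun_prop) (Filter.Eventually.of_forall fun x => ?_)
    rw [Complex.norm_exp_ofReal_mul_I]
  have h1 := hasSum_integral_measure hIntg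
  have h2 : HasSum (fun n => (∫ x, Complex.exp (⟪x, u⟫ * Complex.I) ∂(M n)))
      (Complex.exp (charFun ν u - m)) := by
    have h := (NormedSpace.expSeries_div_hasSum_exp (charFun ν u)).mul_left (Complex.exp (-m))
    rw [← Complex.exp_eq_exp_ℂ, ← Complex.exp_add] at h
    rw [neg_add_eq_sub] at h
    refine (congrArg (fun g => HasSum g _) (funext fun n => ?_)).mpr h
    simp only [M]
    rw [integral_smul_measure, ← charFun_apply, charFun_convPow, ENNReal.toReal_ofReal (hc n)]
    simp only [c, Complex.real_smul]
    push_cast; ring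
  rw [charFun_apply]
  exact h1.unique h2
end CompoundPoisson


section Smooth
variable {E : Type} [NormedAddCommGroup E] [InnerProductSpace ℝ E] [MeasurableSpace E]
  [BorelSpace E] [SecondCountableTopology E] {ρ : Measure E}

lemma hasFDerivAt_phase {V : Type} [NormedAddCommGroup V] [NormedSpace ℝ V]
    {φ φ' : ℝ → ℝ} (hφ : ∀ s, HasDerivAt φ (φ' s) s) (y : E) (w : V) (u : E) :
    HasFDerivAt (fun u : E => φ ⟪u, y⟫ • w) (φ' ⟪u, y⟫ • (innerSL ℝ y).smulRight w) u := by
  have h1 : HasFDerivAt (fun u : E => ⟪u, y⟫) (innerSL ℝ y) u := by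
    have := (innerSL ℝ y).hasFDerivAt (x := u)
    refine this.congr_of_eventuallyEq (Filter.Eventually.of_forall fun v => ?_)
    simp [real_inner_comm]
  have h2 := ((hφ ⟪u, y⟫).comp_hasFDerivAt u h1).smul_const w
  convert! h2 using 1
  ext v
  simp [smul_smul]

lemma meas_smulRight {V : Type} [NormedAddCommGroup V] [NormedSpace ℝ V]
    {W : E → V} (hW : AEStronglyMeasurable W ρ) :
    AEStronglyMeasurable (fun y => (innerSL ℝ y).smulRight (W y)) ρ := by
  have h1 : Continuous (fun p : E × V => (innerSL ℝ p.1).smulRight p.2) := by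
    fun_prop
  exact h1.comp_aestronglyMeasurable (aestronglyMeasurable_id.prodMk hW)

lemma hasFDerivAt_J {V : Type} [NormedAddCommGroup V] [NormedSpace ℝ V]
    {W : E → V} (hW : Integrable W ρ) (hb : ∀ᵐ y ∂ρ, ‖y‖ ≤ 1) (c : ℝ) (u : E) :
    HasFDerivAt (fun u => ∫ y, Real.cos (⟪u, y⟫ + c) • W y ∂ρ)
      (∫ y, Real.cos (⟪u, y⟫ + (c + Real.pi / 2)) • (innerSL ℝ y).smulRight (W y) ∂ρ) u := by
  have hm : ∀ u : E, AEStronglyMeasurable (fun y => Real.cos (⟪u, y⟫ + c) • W y) ρ := fun u =>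
    AEStronglyMeasurable.smul (by fun_prop) hW.1
  refine hasFDerivAt_integral_of_dominated_of_fderiv_le (bound := fun y => ‖W y‖)
    (F' := fun u y => Real.cos (⟪u, y⟫ + (c + Real.pi / 2)) • (innerSL ℝ y).smulRight (W y))
    Filter.univ_mem
    (Filter.Eventually.of_forall hm) ?_ ?_ ?_ hW.norm ?_
  · refine hW.norm.mono' (hm u) (Filter.Eventually.of_forall fun y => ?_)
    rw [norm_smul]
    exact mul_le_of_le_one_left (norm_nonneg _) (Real.abs_cos_le_one _)
  · have hc : AEStronglyMeasurable (fun y => Real.cos (⟪u, y⟫ + (c + Real.pi / 2))) ρ := by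
      fun_prop
    exact hc.smul (meas_smulRight hW.1)
  · filter_upwards [hb] with y hy x _
    rw [norm_smul, ContinuousLinearMap.norm_smulRight_apply, innerSL_apply_norm]
    refine (mul_le_of_le_one_left (by positivity) (Real.abs_cos_le_one _)).trans ?_
    exact mul_le_of_le_one_left (norm_nonneg _) hy
  · filter_upwards with y x _
    have := hasFDerivAt_phase (φ := fun s => Real.cos (s + c))
      (φ' := fun s => Real.cos (s + (c + Real.pi / 2))) (fun s => by
        rw [← add_assoc, Real.cos_add_pi_div_two]
        simpa using ((hasDerivAt_id s).add_const c).cos) y (W y) x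
    exact this

lemma contDiff_J (hb : ∀ᵐ y ∂ρ, ‖y‖ ≤ 1) (n : ℕ) :
    ∀ {V : Type} [NormedAddCommGroup V] [NormedSpace ℝ V]
    {W : E → V} (_ : Integrable W ρ) (c : ℝ),
    ContDiff ℝ n (fun u => ∫ y, Real.cos (⟪u, y⟫ + c) • W y ∂ρ) ∧
    ∃ C, ∀ u, ‖iteratedFDeriv ℝ n (fun u => ∫ y, Real.cos (⟪u, y⟫ + c) • W y ∂ρ) u‖ ≤ C := by
  induction n with
  | zero =>
    intro V _ _ W hW c
    refine ⟨?_, ∫ y, ‖W y‖ ∂ρ, fun u => ?_⟩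
    · rw [Nat.cast_zero, contDiff_zero]
      exact (Differentiable.continuous (𝕜 := ℝ) fun u =>
        (hasFDerivAt_J hW hb c u).differentiableAt)
    · rw [norm_iteratedFDeriv_zero]
      refine norm_integral_le_of_norm_le hW.norm (Filter.Eventually.of_forall fun y => ?_)
      rw [norm_smul]
      exact mul_le_of_le_one_left (norm_nonneg _) (Real.abs_cos_le_one _)
  | succ k ih =>
    intro V _ _ W hW c
    have hW' : Integrable (fun y => (innerSL ℝ y).smulRight (W y)) ρ := by
      refine hW.norm.mono' (meas_smulRight hW.1) ?_
      filter_upwards [hb] with y hy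
      rw [ContinuousLinearMap.norm_smulRight_apply, innerSL_apply_norm]
      exact mul_le_of_le_one_left (norm_nonneg _) hy
    obtain ⟨h1, C, h2⟩ := ih hW' (c + Real.pi / 2)
    have hfd : fderiv ℝ (fun u => ∫ y, Real.cos (⟪u, y⟫ + c) • W y ∂ρ) =
      fun u => ∫ y, Real.cos (⟪u, y⟫ + (c + Real.pi / 2)) • (innerSL ℝ y).smulRight (W y) ∂ρ :=
      funext fun u => (hasFDerivAt_J hW hb c u).fderiv
    refine ⟨?_, C, fun u => ?_⟩
    · push_cast
      rw [contDiff_succ_iff_fderiv, hfd]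
      exact ⟨fun u => (hasFDerivAt_J hW hb c u).differentiableAt, by simp, h1⟩
    · rw [← norm_iteratedFDeriv_fderiv, hfd]
      exact h2 u

variable {ω : E → ℝ}

lemma integrable_Psi (hω : Measurable ω) (hω0 : ∀ y, 0 ≤ ω y)
    (hi : Integrable (fun y => ‖y‖ ^ 2 * ω y) ρ) (u : E) :
    Integrable (fun y => (1 - Real.cos ⟪u, y⟫) * ω y) ρ := by
  refine (hi.const_mul (‖u‖ ^ 2)).mono' (by fun_prop) (Filter.Eventually.of_forall fun y => ?_)
  have h1 : 0 ≤ 1 - Real.cos ⟪u, y⟫ := by linarith [Real.cos_le_one ⟪u, y⟫]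
  have h2 := Real.one_sub_sq_div_two_le_cos (x := ⟪u, y⟫)
  have h3 : ⟪u, y⟫ ^ 2 ≤ (‖u‖ * ‖y‖) ^ 2 := by
    rw [sq_le_sq, abs_of_nonneg (a := ‖u‖ * ‖y‖) (by positivity)]
    exact abs_real_inner_le_norm u y
  rw [norm_mul, Real.norm_of_nonneg h1, Real.norm_of_nonneg (hω0 y), ← mul_assoc]
  refine mul_le_mul_of_nonneg_right ?_ (hω0 y)
  nlinarith [sq_nonneg ⟪u, y⟫]

lemma integrable_smulRight_aux {V : Type} [NormedAddCommGroup V] [NormedSpace ℝ V]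
    {W : E → V} (hi : Integrable (fun y => ‖y‖ ^ 2 * ω y) ρ) (hW : AEStronglyMeasurable W ρ)
    (hn : ∀ y, ‖W y‖ ≤ ‖y‖ * ω y) :
    Integrable (fun y => (innerSL ℝ y).smulRight (W y)) ρ := by
  refine hi.mono' (meas_smulRight hW) (Filter.Eventually.of_forall fun y => ?_)
  rw [ContinuousLinearMap.norm_smulRight_apply, innerSL_apply_norm]
  nlinarith [hn y, norm_nonneg y]

lemma hasFDerivAt_gen {V : Type} [NormedAddCommGroup V] [NormedSpace ℝ V]
    {W : E → V} {φ φ' : ℝ → ℝ} (hφ : ∀ s, HasDerivAt φ (φ' s) s) (hφ' : Continuous φ')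
    (u : E) (hW : AEStronglyMeasurable W ρ) (hIntg : Integrable (fun y => φ ⟪u, y⟫ • W y) ρ)
    {bound : E → ℝ} (hbi : Integrable bound ρ)
    (hbd : ∀ y, ∀ v ∈ ball u 1, ‖φ' ⟪v, y⟫‖ * (‖y‖ * ‖W y‖) ≤ bound y) :
    HasFDerivAt (fun u => ∫ y, φ ⟪u, y⟫ • W y ∂ρ)
      (∫ y, φ' ⟪u, y⟫ • (innerSL ℝ y).smulRight (W y) ∂ρ) u := by
  have hφc : Continuous φ := continuous_iff_continuousAt.2 fun s => (hφ s).continuousAt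
  have hm : ∀ u : E, AEStronglyMeasurable (fun y => φ ⟪u, y⟫) ρ := fun u =>
    (hφc.comp (by fun_prop : Continuous fun y : E => ⟪u, y⟫)).aestronglyMeasurable
  have hm' : AEStronglyMeasurable (fun y => φ' ⟪u, y⟫) ρ :=
    (hφ'.comp (by fun_prop : Continuous fun y : E => ⟪u, y⟫)).aestronglyMeasurable
  refine hasFDerivAt_integral_of_dominated_of_fderiv_le
    (bound := bound) (F' := fun u y => φ' ⟪u, y⟫ • (innerSL ℝ y).smulRight (W y))
    (ball_mem_nhds u one_pos)
    (Filter.Eventually.of_forall fun v => (hm v).smul hW) hIntg (hm'.smul (meas_smulRight hW))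
    ?_ hbi ?_
  · filter_upwards with y v hv
    rw [norm_smul, ContinuousLinearMap.norm_smulRight_apply, innerSL_apply_norm]
    exact hbd y v hv
  · filter_upwards with y v _
    exact hasFDerivAt_phase hφ y (W y) v

lemma sin_smul_bound {V : Type} [NormedAddCommGroup V] [NormedSpace ℝ V]
    {W : E → V} (hn : ∀ y, ‖W y‖ ≤ ‖y‖ * ω y) (u y : E) :
    ‖Real.sin ⟪u, y⟫ • W y‖ ≤ ‖u‖ * (‖y‖ ^ 2 * ω y) := by
  rw [norm_smul]
  have h1 : ‖Real.sin ⟪u, y⟫‖ ≤ ‖u‖ * ‖y‖ :=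
    le_trans Real.abs_sin_le_abs (abs_real_inner_le_norm u y)
  calc _ ≤ (‖u‖ * ‖y‖) * (‖y‖ * ω y) :=
        mul_le_mul h1 (hn y) (norm_nonneg _) (by positivity)
    _ = _ := by ring

lemma smooth_sin {V : Type} [NormedAddCommGroup V] [NormedSpace ℝ V]
    {W : E → V} (hω0 : ∀ y, 0 ≤ ω y)
    (hi : Integrable (fun y => ‖y‖ ^ 2 * ω y) ρ) (hb : ∀ᵐ y ∂ρ, ‖y‖ ≤ 1)
    (hW : AEStronglyMeasurable W ρ)
    (hn : ∀ y, ‖W y‖ ≤ ‖y‖ * ω y) (n : ℕ) :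
    ContDiff ℝ (n + 1 : ℕ) (fun u => ∫ y, Real.sin ⟪u, y⟫ • W y ∂ρ) ∧
    ∃ C, ∀ u, ‖iteratedFDeriv ℝ n (fun u => ∫ y, Real.sin ⟪u, y⟫ • W y ∂ρ) u‖
      ≤ C * (1 + ‖u‖) := by
  have hW2 := integrable_smulRight_aux hi hW hn
  have hcm : ∀ u : E, AEStronglyMeasurable (fun y => Real.sin ⟪u, y⟫) ρ := fun u => by fun_prop
  have hd : ∀ u, HasFDerivAt (fun u => ∫ y, Real.sin ⟪u, y⟫ • W y ∂ρ)
      (∫ y, Real.cos (⟪u, y⟫ + 0) • (innerSL ℝ y).smulRight (W y) ∂ρ) u := fun u => by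
    refine hasFDerivAt_gen (φ' := fun s => Real.cos (s + 0))
      (fun s => by simpa using Real.hasDerivAt_sin s) (by fun_prop) u hW ?_ hi ?_
    · exact (hi.const_mul ‖u‖).mono' ((hcm u).smul hW)
        (Filter.Eventually.of_forall (sin_smul_bound hn u))
    · intro y v _
      refine (mul_le_of_le_one_left (by positivity) (Real.abs_cos_le_one _)).trans ?_
      nlinarith [hn y, norm_nonneg y]
  have hf : fderiv ℝ (fun u => ∫ y, Real.sin ⟪u, y⟫ • W y ∂ρ) =
      fun u => ∫ y, Real.cos (⟪u, y⟫ + 0) • (innerSL ℝ y).smulRight (W y) ∂ρ :=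
    funext fun u => (hd u).fderiv
  refine ⟨?_, ?_⟩
  · push_cast
    rw [contDiff_succ_iff_fderiv, hf]
    exact ⟨fun u => (hd u).differentiableAt, by simp, (contDiff_J hb n hW2 0).1⟩
  · cases n with
    | zero =>
      refine ⟨∫ y, ‖y‖ ^ 2 * ω y ∂ρ, fun u => ?_⟩
      rw [norm_iteratedFDeriv_zero]
      have h1 := norm_integral_le_of_norm_le (hi.const_mul ‖u‖)
        (Filter.Eventually.of_forall (sin_smul_bound hn u))
      rw [integral_const_mul] at h1
      have h0 : 0 ≤ ∫ y, ‖y‖ ^ 2 * ω y ∂ρ :=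
        integral_nonneg fun y => mul_nonneg (by positivity) (hω0 y)
      nlinarith
    | succ k =>
      obtain ⟨C, hC⟩ := (contDiff_J hb k hW2 0).2
      refine ⟨|C|, fun u => ?_⟩
      rw [← norm_iteratedFDeriv_fderiv, hf]
      have := abs_nonneg C
      nlinarith [hC u, le_abs_self C, norm_nonneg u, mul_nonneg this (norm_nonneg u)]

lemma psi_smooth (hω : Measurable ω) (hω0 : ∀ y, 0 ≤ ω y)
    (hi : Integrable (fun y => ‖y‖ ^ 2 * ω y) ρ) (hb : ∀ᵐ y ∂ρ, ‖y‖ ≤ 1) :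
    (∀ n : ℕ, ContDiff ℝ n (fun u => ∫ y, (1 - Real.cos ⟪u, y⟫) * ω y ∂ρ)) ∧
    ∀ n : ℕ, 1 ≤ n → ∃ C, ∀ u,
      ‖iteratedFDeriv ℝ n (fun u => ∫ y, (1 - Real.cos ⟪u, y⟫) * ω y ∂ρ) u‖ ≤ C * (1 + ‖u‖) := by
  have hn : ∀ y, ‖(innerSL ℝ y).smulRight (ω y)‖ ≤ ‖y‖ * ω y := fun y => by
    rw [ContinuousLinearMap.norm_smulRight_apply, innerSL_apply_norm,
      Real.norm_of_nonneg (hω0 y)]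
  have hW : AEStronglyMeasurable (fun y => (innerSL ℝ y).smulRight (ω y)) ρ :=
    meas_smulRight hω.aestronglyMeasurable
  have hS := smooth_sin hω0 hi hb hW hn
  have hd : ∀ u, HasFDerivAt (fun u => ∫ y, (1 - Real.cos ⟪u, y⟫) * ω y ∂ρ)
      (∫ y, Real.sin ⟪u, y⟫ • (innerSL ℝ y).smulRight (ω y) ∂ρ) u := fun u => by
    refine hasFDerivAt_gen (φ := fun s => 1 - Real.cos s)
      (bound := fun y => (‖u‖ + 1) * (‖y‖ ^ 2 * ω y))
      (fun s => by simpa using (Real.hasDerivAt_cos s).const_sub 1) (by fun_prop) u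
      hω.aestronglyMeasurable (integrable_Psi hω hω0 hi u) (hi.const_mul _) ?_
    intro y v hv
    have h1 : ‖Real.sin ⟪v, y⟫‖ ≤ ‖v‖ * ‖y‖ :=
      le_trans Real.abs_sin_le_abs (abs_real_inner_le_norm v y)
    have h2 : ‖v‖ ≤ ‖u‖ + 1 := by
      have := norm_sub_norm_le v u
      rw [mem_ball, dist_eq_norm] at hv
      linarith
    have h3 : ‖v‖ * ‖y‖ ≤ (‖u‖ + 1) * ‖y‖ := mul_le_mul_of_nonneg_right h2 (norm_nonneg y)
    rw [Real.norm_of_nonneg (hω0 y)]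
    calc _ ≤ ((‖u‖ + 1) * ‖y‖) * (‖y‖ * ω y) :=
          mul_le_mul_of_nonneg_right (h1.trans h3) (mul_nonneg (norm_nonneg _) (hω0 y))
      _ = _ := by ring
  have hf : fderiv ℝ (fun u => ∫ y, (1 - Real.cos ⟪u, y⟫) * ω y ∂ρ) =
      fun u => ∫ y, Real.sin ⟪u, y⟫ • (innerSL ℝ y).smulRight (ω y) ∂ρ :=
    funext fun u => (hd u).fderiv
  have hcd : ∀ n : ℕ, ContDiff ℝ ((n + 1 + 1 : ℕ))
      (fun u => ∫ y, (1 - Real.cos ⟪u, y⟫) * ω y ∂ρ) := by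
    intro n
    rw [Nat.cast_add, Nat.cast_one, contDiff_succ_iff_fderiv, hf]
    exact ⟨fun u => (hd u).differentiableAt, by simp, (hS n).1⟩
  refine ⟨fun n => (hcd n).of_le (by exact_mod_cast (by omega)), fun n hn1 => ?_⟩
  obtain ⟨k, rfl⟩ : ∃ k, n = k + 1 := ⟨n - 1, by omega⟩
  obtain ⟨C, hC⟩ := (hS k).2
  refine ⟨C, fun u => ?_⟩
  rw [← norm_iteratedFDeriv_fderiv, hf]
  exact hC u
end Smooth


section Schwartz
variable {E : Type} [NormedAddCommGroup E] [InnerProductSpace ℝ E]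

lemma exists_schwartz_exp {P : E → ℝ} (hP : ∀ n : ℕ, ContDiff ℝ n P)
    (hD : ∀ n : ℕ, 1 ≤ n → ∃ C, ∀ u, ‖iteratedFDeriv ℝ n P u‖ ≤ C * (1 + ‖u‖))
    {c : ℝ} (hc : 0 < c) (hlow : ∀ u, c * ‖u‖ - c ≤ P u) {t : ℝ} (ht : 0 < t) :
    ∃ f : SchwartzMap E ℝ, ∀ u, f u = Real.exp (-t * P u) := by
  have hQ : ContDiff ℝ (⊤ : ℕ∞) (fun u => -t * P u) :=
    contDiff_const.mul (contDiff_infty.2 hP)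
  refine ⟨⟨fun u => Real.exp (-t * P u), Real.contDiff_exp.comp hQ, ?_⟩, fun u => rfl⟩
  intro k n
  choose! C hC using hD
  let K : ℝ := 1 + ∑ i ∈ Finset.range (n + 1), t * |C i|
  have hKi : ∀ i ≤ n, t * C i ≤ K := by
    intro i hi
    have h1 : t * |C i| ≤ ∑ i ∈ Finset.range (n + 1), t * |C i| :=
      Finset.single_le_sum (f := fun i => t * |C i|) (fun j _ => by positivity)
        (Finset.mem_range.2 (by omega))
    have h2 : t * C i ≤ t * |C i| := mul_le_mul_of_nonneg_left (le_abs_self _) ht.le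
    simp only [K]; linarith
  have hK1 : 1 ≤ K := by
    have : 0 ≤ ∑ i ∈ Finset.range (n + 1), t * |C i| :=
      Finset.sum_nonneg fun j _ => by positivity
    simp only [K]; linarith
  set a := t * c with ha
  have ha0 : 0 < a := by positivity
  refine ⟨n.factorial * K ^ n * Real.exp (2 * a) * ((n + k).factorial / a ^ (n + k)), fun u => ?_⟩
  have hr := norm_nonneg u
  set r := ‖u‖
  have hDer : ‖iteratedFDeriv ℝ n (Real.exp ∘ fun u => -t * P u) u‖ ≤
      n.factorial * Real.exp (-t * P u) * (K * (1 + r)) ^ n := by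
    refine norm_iteratedFDeriv_comp_le (N := (⊤ : ℕ∞)) Real.contDiff_exp hQ
      (by exact_mod_cast le_top) u ?_ ?_
    · intro i _
      rw [norm_iteratedFDeriv_eq_norm_iteratedDeriv, iteratedDeriv_eq_iterate, Real.iter_deriv_exp,
        Real.norm_of_nonneg (Real.exp_pos _).le]
    · intro i hi1 hin
      have h1 : iteratedFDeriv ℝ i (fun u => -t * P u) u = (-t) • iteratedFDeriv ℝ i P u :=
        iteratedFDeriv_const_smul_apply (a := -t) (hP i).contDiffAt
      rw [h1, norm_smul, norm_neg, Real.norm_of_nonneg ht.le]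
      have h2 : 1 ≤ K * (1 + r) := by nlinarith
      calc t * ‖iteratedFDeriv ℝ i P u‖ ≤ t * (C i * (1 + r)) :=
            mul_le_mul_of_nonneg_left (hC i hi1 u) ht.le
        _ = (t * C i) * (1 + r) := by ring
        _ ≤ K * (1 + r) := mul_le_mul_of_nonneg_right (hKi i hin) (by positivity)
        _ ≤ (K * (1 + r)) ^ i := le_self_pow₀ h2 (by omega)
  have hexp : Real.exp (-t * P u) ≤ Real.exp (2 * a) * Real.exp (-(a * (1 + r))) := by
    rw [← Real.exp_add]
    refine Real.exp_le_exp.2 ?_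
    have := mul_le_mul_of_nonneg_left (hlow u) ht.le
    simp only [ha]; nlinarith
  have hpow : (1 + r) ^ (n + k) * Real.exp (-(a * (1 + r))) ≤ (n + k).factorial / a ^ (n + k) := by
    have h := Real.pow_div_factorial_le_exp (a * (1 + r)) (by positivity) (n + k)
    rw [Real.exp_neg, ← div_eq_mul_inv, div_le_div_iff₀ (Real.exp_pos _) (by positivity)]
    rw [div_le_iff₀ (by positivity), mul_pow] at h
    linarith
  calc r ^ k * ‖iteratedFDeriv ℝ n (Real.exp ∘ fun u => -t * P u) u‖
      ≤ (1 + r) ^ k * (n.factorial * (Real.exp (2 * a) * Real.exp (-(a * (1 + r)))) *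
          (K * (1 + r)) ^ n) := by
        refine mul_le_mul (pow_le_pow_left₀ hr (by linarith) k) (hDer.trans ?_)
          (norm_nonneg _) (by positivity)
        gcongr
    _ = n.factorial * K ^ n * Real.exp (2 * a) *
          ((1 + r) ^ (n + k) * Real.exp (-(a * (1 + r)))) := by
        rw [mul_pow, pow_add]; ring
    _ ≤ _ := by gcongr
end Schwartz

section Dens
open FourierTransform
variable {d : ℕ}

lemma exists_schwartz_cosTransform (f : SchwartzMap (EuclideanSpace ℝ (Fin d)) ℝ) (c : ℝ) :
    ∃ p : SchwartzMap (EuclideanSpace ℝ (Fin d)) ℝ,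
      ∀ x, p x = c * ∫ u, Real.cos ⟪x, u⟫ * f u := by
  let F : SchwartzMap (EuclideanSpace ℝ (Fin d)) ℂ := f.postcompCLM Complex.ofRealCLM
  let G : SchwartzMap (EuclideanSpace ℝ (Fin d)) ℝ := (𝓕 F).postcompCLM Complex.reCLM
  have hpi : (2 * Real.pi)⁻¹ ≠ 0 := by positivity
  let L : EuclideanSpace ℝ (Fin d) ≃L[ℝ] EuclideanSpace ℝ (Fin d) :=
    ContinuousLinearEquiv.smulLeft (Units.mk0 (2 * Real.pi)⁻¹ hpi)
  refine ⟨c • SchwartzMap.compCLMOfContinuousLinearEquiv ℝ L G, fun x => ?_⟩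
  have hL : L x = (2 * Real.pi)⁻¹ • x := rfl
  have h1 : (𝓕 F) (L x) = ∫ u, Complex.exp ((-⟪x, u⟫ : ℝ) * Complex.I) * (f u : ℂ) := by
    rw [SchwartzMap.fourier_coe, Real.fourier_eq']
    refine integral_congr_ae (Filter.Eventually.of_forall fun u => ?_)
    simp only [F, SchwartzMap.postcompCLM_apply, Complex.ofRealCLM_apply, smul_eq_mul]
    congr 3
    rw [hL, inner_smul_right, real_inner_comm]
    have := Real.pi_pos
    field_simp
  have hIntg : Integrable (fun u => Complex.exp ((-⟪x, u⟫ : ℝ) * Complex.I) * (f u : ℂ)) := by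
    refine f.integrable.norm.mono' (by fun_prop) (Filter.Eventually.of_forall fun u => ?_)
    rw [norm_mul, Complex.norm_exp_ofReal_mul_I, one_mul, Complex.norm_real]
  simp only [smul_apply, SchwartzMap.compCLMOfContinuousLinearEquiv_apply,
    Function.comp, G, SchwartzMap.postcompCLM_apply, smul_eq_mul]
  congr 1
  rw [h1, Complex.reCLM_apply, ← RCLike.re_eq_complex_re, ← integral_re hIntg]
  refine integral_congr_ae (Filter.Eventually.of_forall fun u => ?_)
  change (Complex.exp ((-⟪x, u⟫ : ℝ) * Complex.I) * (f u : ℂ)).re = Real.cos ⟪x, u⟫ * f u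
  rw [Complex.re_mul_ofReal, Complex.exp_ofReal_mul_I_re, Real.cos_neg]
end Dens


section Concrete
variable {d : ℕ} {α : ℝ}

lemma integrableOn_levy (hd : 2 ≤ d) (hα2 : α < 2) (R : ℝ) :
    IntegrableOn (fun y : EuclideanSpace ℝ (Fin d) => ‖y‖ ^ 2 * (‖y‖ ^ ((d : ℝ) + α))⁻¹)
      (closedBall 0 R) := by
  have : Nontrivial (EuclideanSpace ℝ (Fin d)) := by
    have : Nonempty (Fin d) := ⟨⟨0, by omega⟩⟩
    infer_instance
  refine IntegrableOn.mono_set ?_ (closedBall_subset_ball (ε₂ := |R| + 1)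
    (by linarith [le_abs_self R]))
  have := (integrableOn_fun_norm_addHaar (volume : Measure (EuclideanSpace ℝ (Fin d)))
    (f := fun r : ℝ => r ^ 2 * (r ^ ((d : ℝ) + α))⁻¹) (r := |R| + 1)).2
  refine this ?_
  have h2 := (intervalIntegral.integrableOn_Ioo_rpow_iff (s := 1 - α) (t := |R| + 1)
    (by positivity)).2 (by linarith)
  refine h2.congr_fun (fun r hr => ?_) measurableSet_Ioo
  have hr0 : 0 < r := hr.1
  simp only [smul_eq_mul, finrank_euclideanSpace_fin]
  rw [← Real.rpow_natCast, ← Real.rpow_natCast r 2, ← Real.rpow_neg hr0.le, ← Real.rpow_add hr0,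
    ← Real.rpow_add hr0]
  congr 1
  rw [Nat.cast_sub (by omega)]
  push_cast; ring

lemma measurable_levy :
    Measurable (fun y : EuclideanSpace ℝ (Fin d) => (‖y‖ ^ ((d : ℝ) + α))⁻¹) := by
  fun_prop

lemma levy_nonneg (y : EuclideanSpace ℝ (Fin d)) : 0 ≤ (‖y‖ ^ ((d : ℝ) + α))⁻¹ := by
  positivity

/-- `Psi` with truncation at radius `R`. -/
noncomputable def PsiR (d : ℕ) (α : ℝ) (R : ℝ) (u : EuclideanSpace ℝ (Fin d)) : ℝ :=
  ∫ y in closedBall (0 : EuclideanSpace ℝ (Fin d)) R,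
    (1 - Real.cos ⟪u, y⟫) * (‖y‖ ^ ((d : ℝ) + α))⁻¹

lemma Psi_eq (u : EuclideanSpace ℝ (Fin d)) : Psi d α u = PsiR d α 1 u := by
  simp only [Psi, PsiR, div_eq_mul_inv]

lemma integrableOn_PsiR (hd : 2 ≤ d) (hα2 : α < 2) (R : ℝ) (u : EuclideanSpace ℝ (Fin d)) :
    IntegrableOn (fun y => (1 - Real.cos ⟪u, y⟫) * (‖y‖ ^ ((d : ℝ) + α))⁻¹) (closedBall 0 R) :=
  integrable_Psi measurable_levy levy_nonneg (integrableOn_levy hd hα2 R) u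

lemma levy_integrand_nonneg (u y : EuclideanSpace ℝ (Fin d)) :
    0 ≤ (1 - Real.cos ⟪u, y⟫) * (‖y‖ ^ ((d : ℝ) + α))⁻¹ :=
  mul_nonneg (by linarith [Real.cos_le_one ⟪u, y⟫]) (levy_nonneg y)

lemma Psi_scale {l : ℝ} (hl : 0 < l) (u : EuclideanSpace ℝ (Fin d)) :
    Psi d α (l • u) = l ^ α * PsiR d α l u := by
  have h := Measure.setIntegral_comp_smul_of_pos (volume : Measure (EuclideanSpace ℝ (Fin d)))
    (fun y => (1 - Real.cos ⟪u, y⟫) * (‖y‖ ^ ((d : ℝ) + α))⁻¹) (closedBall 0 1) hl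
  rw [smul_closedBall' hl.ne', smul_zero, Real.norm_of_nonneg hl.le, mul_one,
    finrank_euclideanSpace_fin] at h
  have h2 : ∀ y : EuclideanSpace ℝ (Fin d),
      (1 - Real.cos ⟪u, l • y⟫) * (‖l • y‖ ^ ((d : ℝ) + α))⁻¹ =
      (l ^ ((d : ℝ) + α))⁻¹ * ((1 - Real.cos ⟪l • u, y⟫) * (‖y‖ ^ ((d : ℝ) + α))⁻¹) := by
    intro y
    rw [norm_smul, Real.norm_of_nonneg hl.le, Real.mul_rpow hl.le (norm_nonneg _), mul_inv,
      inner_smul_right, real_inner_smul_left]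
    ring
  simp_rw [h2] at h
  rw [integral_const_mul, smul_eq_mul] at h
  rw [Psi_eq]
  simp only [PsiR]
  have h3 : l ^ ((d : ℝ) + α) = l ^ d * l ^ α := by
    rw [Real.rpow_add hl, Real.rpow_natCast]
  have h4 : 0 < l ^ d := by positivity
  have h5 : 0 < l ^ α := by positivity
  rw [h3] at h
  field_simp at h
  simpa only [div_eq_mul_inv] using h

lemma PsiR_split (hd : 2 ≤ d) (hα2 : α < 2) {l : ℝ} (hl : 1 ≤ l) (u : EuclideanSpace ℝ (Fin d)) :
    PsiR d α l u = Psi d α u + ∫ y in closedBall (0 : EuclideanSpace ℝ (Fin d)) l \ closedBall 0 1,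
      (1 - Real.cos ⟪u, y⟫) * (‖y‖ ^ ((d : ℝ) + α))⁻¹ := by
  rw [Psi_eq, setIntegral_sdiff measurableSet_closedBall (integrableOn_PsiR hd hα2 l u)
    (closedBall_subset_closedBall hl)]
  simp only [PsiR]; ring

lemma Psi_smooth (hd : 2 ≤ d) (hα2 : α < 2) :
    (∀ n : ℕ, ContDiff ℝ n (Psi d α)) ∧
    ∀ n : ℕ, 1 ≤ n → ∃ C, ∀ u, ‖iteratedFDeriv ℝ n (Psi d α) u‖ ≤ C * (1 + ‖u‖) := by
  have h := psi_smooth (ρ := volume.restrict (closedBall (0 : EuclideanSpace ℝ (Fin d)) 1))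
    measurable_levy levy_nonneg (integrableOn_levy (α := α) hd hα2 1)
    (by filter_upwards [ae_restrict_mem measurableSet_closedBall] with y hy
        simpa using hy)
  have he : Psi d α = fun u => ∫ y in closedBall (0 : EuclideanSpace ℝ (Fin d)) 1,
    (1 - Real.cos ⟪u, y⟫) * (‖y‖ ^ ((d : ℝ) + α))⁻¹ := funext fun u => Psi_eq u
  rw [he]
  exact h

lemma Psi_nonneg (u : EuclideanSpace ℝ (Fin d)) : 0 ≤ Psi d α u := by
  rw [Psi_eq]; exact integral_nonneg fun y => levy_integrand_nonneg u y

lemma Psi_pos (hd : 2 ≤ d) (hα2 : α < 2) {u : EuclideanSpace ℝ (Fin d)} (hu : ‖u‖ = 1) :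
    0 < Psi d α u := by
  rw [Psi_eq, PsiR, setIntegral_pos_iff_support_of_nonneg_ae
    (Filter.Eventually.of_forall fun y => levy_integrand_nonneg u y)
    (integrableOn_PsiR hd hα2 1 u)]
  have hop : IsOpen (ball (0 : EuclideanSpace ℝ (Fin d)) 1 ∩ {y | ⟪u, y⟫ ≠ 0}) :=
    isOpen_ball.inter (isOpen_ne_fun (by fun_prop) (by fun_prop))
  refine lt_of_lt_of_le (hop.measure_pos volume ⟨(1 / 2 : ℝ) • u, ?_, ?_⟩) (measure_mono ?_)
  · rw [mem_ball_zero_iff, norm_smul, hu]; norm_num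
  · simp [inner_smul_right, hu]
  · rintro y ⟨hy1, hy2⟩
    refine ⟨?_, ball_subset_closedBall hy1⟩
    have hy0 : y ≠ 0 := by rintro rfl; simp at hy2
    have hcos : Real.cos ⟪u, y⟫ < 1 := by
      refine lt_of_le_of_ne (Real.cos_le_one _) fun h => hy2 ?_
      have hle : |⟪u, y⟫| < 1 := by
        refine (abs_real_inner_le_norm u y).trans_lt ?_
        rw [hu, one_mul]; simpa using hy1
      have hpi := Real.pi_gt_three
      rw [abs_lt] at hle
      exact (Real.cos_eq_one_iff_of_lt_of_lt (by linarith) (by linarith)).1 h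
    have : 0 < ‖y‖ := norm_pos_iff.2 hy0
    exact (mul_pos (by linarith) (by positivity)).ne'

lemma Psi_lower (hd : 2 ≤ d) (hα1 : 1 < α) (hα2 : α < 2) :
    ∃ c > 0, ∀ u, c * ‖u‖ - c ≤ Psi d α u := by
  have hcont : Continuous (Psi d α) := ((Psi_smooth hd hα2).1 0).continuous
  have hne : (sphere (0 : EuclideanSpace ℝ (Fin d)) 1).Nonempty :=
    ⟨EuclideanSpace.single ⟨0, by omega⟩ 1, by simp⟩
  obtain ⟨e, he, hmin⟩ := (isCompact_sphere (0 : EuclideanSpace ℝ (Fin d)) 1).exists_isMinOn hne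
    hcont.continuousOn
  refine ⟨Psi d α e, Psi_pos hd hα2 (by simpa using he), fun u => ?_⟩
  have hc : 0 < Psi d α e := Psi_pos hd hα2 (by simpa using he)
  by_cases hu : ‖u‖ ≤ 1
  · have := Psi_nonneg (α := α) u
    nlinarith
  push Not at hu
  have hu0 : 0 < ‖u‖ := by linarith
  have h1 : u = ‖u‖ • (‖u‖⁻¹ • u) := by rw [smul_smul, mul_inv_cancel₀ hu0.ne', one_smul]
  set v := ‖u‖⁻¹ • u with hv
  have hvn : ‖v‖ = 1 := by rw [hv, norm_smul, norm_inv, norm_norm, inv_mul_cancel₀ hu0.ne']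
  have h2 : Psi d α e ≤ Psi d α v := hmin (by simpa using hvn)
  have h3 : Psi d α u = ‖u‖ ^ α * PsiR d α ‖u‖ v := by
    conv_lhs => rw [h1]
    exact Psi_scale hu0 v
  have h4 : Psi d α v ≤ PsiR d α ‖u‖ v := by
    rw [PsiR_split hd hα2 hu.le]
    have := setIntegral_nonneg (μ := volume)
      (measurableSet_closedBall.diff measurableSet_closedBall :
      MeasurableSet (closedBall (0 : EuclideanSpace ℝ (Fin d)) ‖u‖ \ closedBall 0 1))
      (fun y _ => levy_integrand_nonneg (α := α) v y)
    linarith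
  have h5 : ‖u‖ ≤ ‖u‖ ^ α := Real.self_le_rpow_of_one_le hu.le hα1.le
  rw [h3]
  nlinarith [mul_le_mul h5 (h2.trans h4) hc.le (by positivity)]

lemma exists_schwartz_expPsi (hd : 2 ≤ d) (hα1 : 1 < α) (hα2 : α < 2) {t : ℝ} (ht : 0 < t) :
    ∃ f : SchwartzMap (EuclideanSpace ℝ (Fin d)) ℝ, ∀ u, f u = Real.exp (-t * Psi d α u) := by
  obtain ⟨c, hc, hlow⟩ := Psi_lower hd hα1 hα2
  exact exists_schwartz_exp (Psi_smooth hd hα2).1 (Psi_smooth hd hα2).2 hc hlow ht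

lemma exists_schwartz_pdens (hd : 2 ≤ d) (hα1 : 1 < α) (hα2 : α < 2) {t : ℝ} (ht : 0 < t) :
    ∃ p : SchwartzMap (EuclideanSpace ℝ (Fin d)) ℝ, ∀ x, p x = pdens d α t x := by
  obtain ⟨f, hf⟩ := exists_schwartz_expPsi hd hα1 hα2 ht
  obtain ⟨p, hp⟩ := exists_schwartz_cosTransform f ((2 * Real.pi) ^ d)⁻¹
  refine ⟨p, fun x => ?_⟩
  rw [hp]
  simp only [pdens, hf]
end Concrete

section Final
variable {d : ℕ} {α : ℝ}

lemma charFun_cos_sin (μ : Measure (EuclideanSpace ℝ (Fin d))) [IsFiniteMeasure μ]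
    (u : EuclideanSpace ℝ (Fin d)) :
    charFun μ u = ((∫ z, Real.cos ⟪z, u⟫ ∂μ : ℝ) : ℂ) +
      ((∫ z, Real.sin ⟪z, u⟫ ∂μ : ℝ) : ℂ) * Complex.I := by
  have hc : Integrable (fun z => Real.cos ⟪z, u⟫) μ :=
    (integrable_const (1 : ℝ)).mono' (by fun_prop)
      (Filter.Eventually.of_forall fun z => Real.abs_cos_le_one _)
  have hs : Integrable (fun z => Real.sin ⟪z, u⟫) μ :=
    (integrable_const (1 : ℝ)).mono' (by fun_prop)
      (Filter.Eventually.of_forall fun z => Real.abs_sin_le_one _)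
  rw [charFun_apply, ← integral_complex_ofReal, ← integral_complex_ofReal, ← integral_mul_const,
    ← integral_add hc.ofReal (hs.ofReal.mul_const _)]
  refine integral_congr_ae (Filter.Eventually.of_forall fun z => ?_)
  simp only [Complex.exp_mul_I, Complex.ofReal_cos, Complex.ofReal_sin]

lemma exists_jump_measure {T l : ℝ} (hT : 0 < T) (hα0 : 0 < α) :
    ∃ μ : Measure (EuclideanSpace ℝ (Fin d)), IsProbabilityMeasure μ ∧
      ∀ u, (∫ z, Real.cos ⟪z, u⟫ ∂μ = Real.exp (-T *
        ∫ y in closedBall (0 : EuclideanSpace ℝ (Fin d)) l \ closedBall 0 1,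
          (1 - Real.cos ⟪u, y⟫) * (‖y‖ ^ ((d : ℝ) + α))⁻¹)) ∧ ∫ z, Real.sin ⟪z, u⟫ ∂μ = 0 := by
  let S : Set (EuclideanSpace ℝ (Fin d)) := closedBall 0 l \ closedBall 0 1
  have hS : MeasurableSet S := measurableSet_closedBall.diff measurableSet_closedBall
  let W : EuclideanSpace ℝ (Fin d) → ℝ := S.indicator fun y => T * (‖y‖ ^ ((d : ℝ) + α))⁻¹
  have hWm : Measurable W := (measurable_levy.const_mul T).indicator hS
  have hW0 : ∀ y, 0 ≤ W y := fun y =>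
    Set.indicator_nonneg (fun y _ => mul_nonneg hT.le (levy_nonneg y)) y
  have hSfin : volume S < ⊤ :=
    lt_of_le_of_lt (measure_mono Set.sdiff_subset) measure_closedBall_lt_top
  have hWi : Integrable W := by
    refine (integrable_indicator_iff hS).2 ?_
    refine Measure.integrableOn_of_bounded (M := T) hSfin.ne
      (measurable_levy.const_mul T).aestronglyMeasurable ?_
    filter_upwards [ae_restrict_mem hS] with y hy
    have hy1 : 1 < ‖y‖ := by simpa using hy.2
    rw [Real.norm_of_nonneg (mul_nonneg hT.le (levy_nonneg y))]
    have : 1 ≤ ‖y‖ ^ ((d : ℝ) + α) := Real.one_le_rpow hy1.le (by positivity)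
    have := inv_le_one_of_one_le₀ this
    nlinarith
  have hWeven : ∀ y, W (-y) = W y := by
    intro y
    have : (-y ∈ S) = (y ∈ S) := by simp [S]
    by_cases hy : y ∈ S
    · have hy2 : -y ∈ S := this.symm ▸ hy
      simp only [W, Set.indicator_of_mem hy, Set.indicator_of_mem hy2, norm_neg]
    · have hy2 : -y ∉ S := fun h => hy (this ▸ h)
      simp only [W, Set.indicator_of_notMem hy, Set.indicator_of_notMem hy2]
  let ν := (volume : Measure (EuclideanSpace ℝ (Fin d))).withDensity fun y => ENNReal.ofReal (W y)
  have hνfin : IsFiniteMeasure ν := isFiniteMeasure_withDensity_ofReal hWi.2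
  have hν : ∀ g : EuclideanSpace ℝ (Fin d) → ℝ, ∫ y, g y ∂ν = ∫ y, W y * g y := by
    intro g
    rw [integral_withDensity_eq_integral_toReal_smul (by fun_prop) (by simp)]
    simp only [ENNReal.toReal_ofReal (hW0 _), smul_eq_mul]
  obtain ⟨μ, hμ, h⟩ := exists_compoundPoisson ν
  refine ⟨μ, hμ, fun u => ?_⟩
  have hsin : ∀ u, ∫ y, Real.sin ⟪y, u⟫ ∂ν = 0 := by
    intro u
    rw [hν]
    have := integral_neg_eq_self (fun y => W y * Real.sin ⟪y, u⟫) volume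
    simp only [hWeven, inner_neg_left, Real.sin_neg, mul_neg, integral_neg] at this
    linarith
  have hcos : ∫ y, Real.cos ⟪y, u⟫ ∂ν - ∫ y, Real.cos ⟪y, 0⟫ ∂ν = -T *
        ∫ y in S, (1 - Real.cos ⟪u, y⟫) * (‖y‖ ^ ((d : ℝ) + α))⁻¹ := by
    have hi : ∀ u, Integrable (fun y => W y * Real.cos ⟪y, u⟫) := by
      intro u
      refine hWi.mono (by fun_prop) (Filter.Eventually.of_forall fun y => ?_)
      rw [norm_mul]
      exact mul_le_of_le_one_right (norm_nonneg _) (Real.abs_cos_le_one _)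
    rw [hν, hν, ← integral_sub (hi _) (hi _), ← integral_indicator hS, ← integral_const_mul]
    refine integral_congr_ae (Filter.Eventually.of_forall fun y => ?_)
    by_cases hy : y ∈ S
    · simp only [W, Set.indicator_of_mem hy, inner_zero_right, Real.cos_zero,
        real_inner_comm u y]
      ring
    · simp [W, Set.indicator_of_notMem hy]
  have h1 := h u
  rw [← charFun_zero, charFun_cos_sin, charFun_cos_sin ν, charFun_cos_sin ν, hsin, hsin] at h1
  simp only [Complex.ofReal_zero, zero_mul, add_zero] at h1
  rw [← Complex.ofReal_sub, hcos, ← Complex.ofReal_exp] at h1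
  have hre := congrArg Complex.re h1
  have him := congrArg Complex.im h1
  simp only [Complex.add_re, Complex.add_im, Complex.ofReal_re, Complex.ofReal_im, Complex.mul_re,
    Complex.mul_im, Complex.I_re, Complex.I_im, mul_zero, mul_one, zero_add, add_zero, sub_zero,
    sub_self] at hre him
  exact ⟨hre, him⟩

lemma pdens_conv (hd : 2 ≤ d) (hα1 : 1 < α) (hα2 : α < 2) {T t l : ℝ} (hT : 0 < T)
    (hl : 1 ≤ l) (htl : t * l ^ α = T) :
    ∃ μ : Measure (EuclideanSpace ℝ (Fin d)), IsProbabilityMeasure μ ∧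
      ∀ x, pdens d α t x = l ^ d * ∫ z, pdens d α T (l • x + z) ∂μ := by
  have hl0 : 0 < l := by linarith
  obtain ⟨μ, hμ, h⟩ := exists_jump_measure (d := d) (l := l) hT (by linarith : 0 < α)
  refine ⟨μ, hμ, fun x => ?_⟩
  obtain ⟨f, hf⟩ := exists_schwartz_expPsi hd hα1 hα2 hT
  simp only [pdens]
  rw [integral_const_mul]
  simp only [← hf]
  rw [integral_integral_swap]
  swap
  · refine ((f.integrable (μ := volume)).comp_snd μ).mono (by unfold Function.uncurry; fun_prop)
      (Filter.Eventually.of_forall fun y => ?_)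
    rw [Function.uncurry, norm_mul]
    exact mul_le_of_le_one_left (norm_nonneg _) (Real.abs_cos_le_one _)
  have hsc := Measure.integral_comp_smul_of_nonneg (volume : Measure (EuclideanSpace ℝ (Fin d)))
    (fun u => Real.cos ⟪x, u⟫ * Real.exp (-t * Psi d α u)) l (hR := hl0.le)
  rw [finrank_euclideanSpace_fin, smul_eq_mul, eq_inv_mul_iff_mul_eq₀ (by positivity)] at hsc
  rw [← hsc, ← mul_assoc, ← mul_assoc, mul_comm _ (l ^ d)]
  congr 1
  refine integral_congr_ae (Filter.Eventually.of_forall fun v => ?_)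
  obtain ⟨hc, hs⟩ := h v
  have hci : Integrable (fun z => Real.cos ⟪z, v⟫) μ :=
    (integrable_const (1 : ℝ)).mono' (by fun_prop)
      (Filter.Eventually.of_forall fun z => Real.abs_cos_le_one _)
  have hsi : Integrable (fun z => Real.sin ⟪z, v⟫) μ :=
    (integrable_const (1 : ℝ)).mono' (by fun_prop)
      (Filter.Eventually.of_forall fun z => Real.abs_sin_le_one _)
  simp only [inner_add_left, Real.cos_add]
  rw [integral_mul_const, integral_sub (hci.const_mul _) (hsi.const_mul _), integral_const_mul,
    integral_const_mul, hc, hs, mul_zero, sub_zero, hf, mul_assoc, ← Real.exp_add,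
    inner_smul_right, real_inner_smul_left, Psi_scale hl0, PsiR_split hd hα2 hl]
  congr 2
  rw [← htl]; ring

lemma deriv_bound (p q : SchwartzMap (EuclideanSpace ℝ (Fin d)) ℝ)
    (μ : Measure (EuclideanSpace ℝ (Fin d))) [IsProbabilityMeasure μ] {l : ℝ} (hl : 0 < l)
    (h : ∀ x, q x = l ^ d * ∫ z, p (l • x + z) ∂μ) (e : EuclideanSpace ℝ (Fin d)) :
    ∫ x, |fderiv ℝ q x e| ≤ l * ∫ x, |fderiv ℝ p x e| := by
  let p' := SchwartzMap.fderivCLM ℝ (EuclideanSpace ℝ (Fin d)) ℝ p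
  have hp' : ∀ x, p' x = fderiv ℝ p x := fun x => rfl
  let M := SchwartzMap.seminorm ℝ 0 0 p'
  have hM : ∀ x, ‖p' x‖ ≤ M := fun x => SchwartzMap.norm_le_seminorm ℝ p' x
  have hbase : ∀ x, ∀ z, HasFDerivAt (fun x => p (l • x + z)) (l • p' (l • x + z)) x := by
    intro x z
    have h1 : HasFDerivAt (fun x : EuclideanSpace ℝ (Fin d) => l • x + z)
      (l • ContinuousLinearMap.id ℝ _) x := ((hasFDerivAt_id x).const_smul l).add_const z
    have h2 := (p.differentiableAt (x := l • x + z)).hasFDerivAt.comp x h1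
    have h3 : (fderiv ℝ p (l • x + z)).comp (l • ContinuousLinearMap.id ℝ _) =
        l • p' (l • x + z) := by
      ext y
      simp [hp']
    rw [h3] at h2
    exact h2
  have hpi : ∀ x, Integrable (fun z => p (l • x + z)) μ := fun x =>
    (integrable_const (SchwartzMap.seminorm ℝ 0 0 p)).mono' (by fun_prop)
      (Filter.Eventually.of_forall fun z => SchwartzMap.norm_le_seminorm ℝ p _)
  have hp'i : ∀ x, Integrable (fun z => l • p' (l • x + z)) μ := fun x =>
    ((integrable_const M).mono' (by fun_prop) (Filter.Eventually.of_forall fun z => hM _)).smul l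
  have hder : ∀ x, HasFDerivAt (fun x => ∫ z, p (l • x + z) ∂μ)
      (∫ z, l • p' (l • x + z) ∂μ) x := by
    intro x
    refine hasFDerivAt_integral_of_dominated_of_fderiv_le (bound := fun _ => l * M)
      Filter.univ_mem (Filter.Eventually.of_forall fun x => (hpi x).aestronglyMeasurable) (hpi x)
      (hp'i x).aestronglyMeasurable (Filter.Eventually.of_forall fun z x _ => ?_)
      (integrable_const _) (Filter.Eventually.of_forall fun z x _ => hbase x z)
    rw [norm_smul, Real.norm_of_nonneg hl.le]
    exact mul_le_mul_of_nonneg_left (hM _) hl.le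
  have hq : ∀ x, fderiv ℝ q x e = l ^ d * (l * ∫ z, p' (l • x + z) e ∂μ) := by
    intro x
    have hqe : (q : EuclideanSpace ℝ (Fin d) → ℝ) = fun x => l ^ d * ∫ z, p (l • x + z) ∂μ :=
      funext h
    rw [hqe, ((hder x).const_mul (l ^ d)).fderiv, smul_apply,
      ContinuousLinearMap.integral_apply (hp'i x)]
    simp [integral_const_mul]
  let g : EuclideanSpace ℝ (Fin d) → ℝ := fun x => p' x e
  have hgc : Continuous g := by fun_prop
  have hgi : Integrable g := p'.integrable.apply_continuousLinearMap e
  have hshift : ∀ z, Integrable (fun x => g (l • x + z)) := fun z =>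
    (hgi.comp_add_right z).comp_smul hl.ne'
  have hval : ∀ z, ∫ x, ‖g (l • x + z)‖ = (l ^ d)⁻¹ * ∫ x, ‖g x‖ := by
    intro z
    rw [Measure.integral_comp_smul_of_nonneg (volume : Measure (EuclideanSpace ℝ (Fin d)))
      (fun x => ‖g (x + z)‖) l (hR := hl.le), finrank_euclideanSpace_fin, smul_eq_mul,
      integral_add_right_eq_self (fun x => ‖g x‖) z]
  have hprod : Integrable (Function.uncurry fun x z => g (l • x + z)) (volume.prod μ) := by
    rw [integrable_prod_iff' (by unfold Function.uncurry; fun_prop)]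
    refine ⟨Filter.Eventually.of_forall fun z => hshift z, ?_⟩
    simp only [Function.uncurry, hval]
    exact integrable_const _
  have hmain : ∫ x, |∫ z, g (l • x + z) ∂μ| ≤ (l ^ d)⁻¹ * ∫ x, ‖g x‖ := by
    calc ∫ x, |∫ z, g (l • x + z) ∂μ| ≤ ∫ x, ∫ z, ‖g (l • x + z)‖ ∂μ :=
          integral_mono hprod.integral_prod_left.norm hprod.norm.integral_prod_left
            fun x => norm_integral_le_integral_norm (fun z => g (l • x + z))
      _ = ∫ z, (∫ x, ‖g (l • x + z)‖) ∂μ := integral_integral_swap (f := fun x z => ‖g (l • x + z)‖) hprod.norm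
      _ = (l ^ d)⁻¹ * ∫ x, ‖g x‖ := by simp only [hval]; simp
  have hld : 0 < l ^ d := by positivity
  calc ∫ x, |fderiv ℝ q x e| = l ^ d * (l * ∫ x, |∫ z, g (l • x + z) ∂μ|) := by
        rw [← integral_const_mul, ← integral_const_mul]
        refine integral_congr_ae (Filter.Eventually.of_forall fun x => ?_)
        simp only [hq, abs_mul, abs_of_pos hl, abs_of_pos hld, g]
    _ ≤ l ^ d * (l * ((l ^ d)⁻¹ * ∫ x, ‖g x‖)) := by gcongr
    _ = l * ∫ x, |fderiv ℝ p x e| := by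
        simp only [g, hp', Real.norm_eq_abs]
        field_simp

end Final

/-- The transition density `p_t` is `C¹`, its partial derivatives are integrable, and
`‖∂p_t/∂x_i‖_{L¹} ≤ C t^{-1/α}` uniformly for `0 < t ≤ T`. -/
theorem stmt_5 (d : ℕ) (hd : 2 ≤ d) (α T : ℝ) (hα1 : 1 < α) (hα2 : α < 2) (hT : 0 < T) :
    (∀ t : ℝ, 0 < t → t ≤ T → ContDiff ℝ 1 (pdens d α t)) ∧
    ∃ C : ℝ, ∀ t : ℝ, 0 < t → t ≤ T → ∀ i : Fin d,
      Integrable (fun x : EuclideanSpace ℝ (Fin d) =>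
        fderiv ℝ (pdens d α t) x (EuclideanSpace.single i 1)) ∧
      (∫ x : EuclideanSpace ℝ (Fin d),
          |fderiv ℝ (pdens d α t) x (EuclideanSpace.single i 1)|) ≤
        C * t ^ (-(1 / α)) := by
  refine ⟨fun t ht _ => ?_, ?_⟩
  · obtain ⟨p, hp⟩ := exists_schwartz_pdens hd hα1 hα2 ht
    rw [← funext hp]
    exact p.smooth 1
  obtain ⟨p, hp⟩ := exists_schwartz_pdens hd hα1 hα2 hT
  refine ⟨T ^ (1 / α) * ∑ i, ∫ x, |fderiv ℝ p x (EuclideanSpace.single i 1)|,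
    fun t ht htT i => ?_⟩
  obtain ⟨q, hq⟩ := exists_schwartz_pdens hd hα1 hα2 ht
  rw [← funext hq]
  refine ⟨((SchwartzMap.fderivCLM ℝ _ ℝ q).integrable (μ := volume)).apply_continuousLinearMap _,
    ?_⟩
  have hα0 : 0 < α := by linarith
  have hl : 1 ≤ (T / t) ^ (1 / α) :=
    Real.one_le_rpow ((one_le_div ht).2 htT) (by positivity)
  have htl : t * ((T / t) ^ (1 / α)) ^ α = T := by
    rw [← Real.rpow_mul (by positivity), one_div_mul_cancel hα0.ne', Real.rpow_one]
    field_simp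
  obtain ⟨μ, hμ, hconv⟩ := pdens_conv hd hα1 hα2 hT hl htl
  have hb := deriv_bound p q μ (zero_lt_one.trans_le hl)
    (fun x => by rw [hq, hconv]; simp only [hp]) (EuclideanSpace.single i 1)
  refine hb.trans ?_
  have hle : ∫ x, |fderiv ℝ p x (EuclideanSpace.single i 1)| ≤
      ∑ i, ∫ x, |fderiv ℝ p x (EuclideanSpace.single i 1)| :=
    Finset.single_le_sum (f := fun i => ∫ x, |fderiv ℝ p x (EuclideanSpace.single i 1)|)
      (fun j _ => integral_nonneg fun x => abs_nonneg _) (Finset.mem_univ i)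
  rw [Real.div_rpow hT.le ht.le, Real.rpow_neg ht.le, div_eq_mul_inv, mul_right_comm]
  gcongr
end

section
/- Let d ≥ 2, α ∈ (1,2), T > 0, and for 0 < t ≤ T define p_t(x) = (2π)^{−d} ∫_{ℝ^d} cos(⟨x,u⟩) e^{−tΨ(u)} du, where Ψ(u) = ∫_{|y|≤1} (1 − cos(⟨u,y⟩)) |y|^{−(d+α)} dy. Then for each 0 < t ≤ T the function p_t is twice continuously differentiable, each second partial derivative ∂²p_t/∂x_i∂x_j belongs to L¹(ℝ^d), and there exists a constant C < ∞ (depending only on d, α, T) such that ‖∂²p_t/∂x_i∂x_j‖_{L¹(ℝ^d)} ≤ C t^{−2/α} for all 0 < t ≤ T and all i, j = 1,…,d. -/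
open MeasureTheory Metric
open scoped RealInnerProductSpace

section ExpMeasure

/-- Compound-Poisson exponential of a finite measure on a commutative monoid, characterised through
its action on bounded characters. -/
lemma exists_expMeasure {G : Type*} [AddCommMonoid G] [MeasurableSpace G] [MeasurableAdd₂ G]
    (μ : Measure G) [IsFiniteMeasure μ] :
    ∃ M : Measure G, IsFiniteMeasure M ∧ ∀ χ : G → ℂ, Measurable χ → (∀ g, ‖χ g‖ ≤ 1) →
      χ 0 = 1 → (∀ a b, χ (a + b) = χ a * χ b) →
      ∫ g, χ g ∂M = Complex.exp (∫ g, χ g ∂μ) := by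
  have hmeas : ∀ n : ℕ, Measurable (fun g : Fin n → G => ∑ i, g i) := fun n =>
    Finset.univ.measurable_fun_sum (fun i _ => measurable_pi_apply i)
  let ν : ℕ → Measure G := fun n =>
    (ENNReal.ofReal ((n.factorial : ℝ)⁻¹)) •
      (Measure.pi (fun _ : Fin n => μ)).map (fun g => ∑ i, g i)
  have hfin : IsFiniteMeasure (Measure.sum ν) := by
    constructor
    rw [Measure.sum_apply _ MeasurableSet.univ]
    have h1 : ∀ n, ν n Set.univ = ENNReal.ofReal ((μ.real Set.univ) ^ n / n.factorial) := by
      intro n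
      simp only [ν, Measure.smul_apply, smul_eq_mul]
      rw [Measure.map_apply (hmeas n) MeasurableSet.univ, Set.preimage_univ, Measure.pi_univ]
      simp only [Finset.prod_const, Finset.card_univ, Fintype.card_fin]
      rw [← ofReal_measureReal, ← ENNReal.ofReal_pow measureReal_nonneg,
        ← ENNReal.ofReal_mul (by positivity)]
      congr 1
      field_simp
    simp_rw [h1]
    rw [← ENNReal.ofReal_tsum_of_nonneg (fun n => by positivity)
      (Real.summable_pow_div_factorial _)]
    exact ENNReal.ofReal_lt_top
  refine ⟨Measure.sum ν, hfin, ?_⟩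
  intro χ hχm hχb h0 hadd
  have hint : Integrable χ (Measure.sum ν) :=
    Integrable.of_bound hχm.aestronglyMeasurable 1 (Filter.Eventually.of_forall hχb)
  have hs := hasSum_integral_measure hint
  have hprod : ∀ n (g : Fin n → G), χ (∑ i, g i) = ∏ i, χ (g i) := by
    intro n g
    induction n with
    | zero => simpa using h0
    | succ n ih => rw [Fin.sum_univ_succ, Fin.prod_univ_succ, hadd, ih]
  have h2 : ∀ n, ∫ x, χ x ∂(ν n) = (∫ g, χ g ∂μ) ^ n / n.factorial := by
    intro n
    simp only [ν]
    rw [integral_smul_measure, integral_map (hmeas n).aemeasurable hχm.aestronglyMeasurable]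
    simp_rw [hprod]
    rw [integral_fintype_prod_eq_pow]
    rw [ENNReal.toReal_ofReal (by positivity)]
    simp [div_eq_inv_mul]
  simp_rw [h2] at hs
  have hs2 := NormedSpace.expSeries_div_hasSum_exp (∫ g, χ g ∂μ)
  rw [← Complex.exp_eq_exp_ℂ] at hs2
  exact hs.unique hs2

end ExpMeasure

section Fourier

variable {V : Type*} [NormedAddCommGroup V] [InnerProductSpace ℝ V] [FiniteDimensional ℝ V]
  [MeasurableSpace V] [BorelSpace V]

/-- Unnormalised Fourier integral. -/
noncomputable def FI (g : V → ℂ) (x : V) : ℂ :=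
  ∫ u, Complex.exp (Complex.I * (⟪x, u⟫ : ℝ)) * g u

/-- The bilinear form that turns `VectorFourier.fourierIntegral` into `FI`. -/
noncomputable def LL (V : Type*) [NormedAddCommGroup V] [InnerProductSpace ℝ V] :
    V →L[ℝ] V →L[ℝ] ℝ := (-(2 * Real.pi)⁻¹ : ℝ) • innerSL ℝ

lemma LL_apply (u x : V) : LL V u x = -(2 * Real.pi)⁻¹ * ⟪u, x⟫ := rfl

lemma FI_eq (g : V → ℂ) :
    FI g = VectorFourier.fourierIntegral Real.fourierChar volume
      (ContinuousLinearMap.toLinearMap₁₂ (LL V)) g := by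
  ext x
  unfold FI VectorFourier.fourierIntegral
  congr 1
  ext u
  rw [Circle.smul_def, Real.fourierChar_apply, smul_eq_mul]
  congr 2
  change Complex.I * ((⟪x, u⟫ : ℝ) : ℂ) = ((2 * Real.pi * -(LL V u x) : ℝ) : ℂ) * Complex.I
  rw [LL_apply, real_inner_comm]
  have : (Real.pi : ℂ) ≠ 0 := by exact_mod_cast Real.pi_ne_zero
  push_cast
  field_simp

lemma FI_hasFDerivAt (g : V → ℂ) (hg : Integrable g) (hg1 : Integrable (fun u => ‖u‖ * ‖g u‖))
    (x : V) : ∃ D : V →L[ℝ] ℂ, HasFDerivAt (FI g) D x ∧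
      ∀ a, D a = FI (fun u => Complex.I * (⟪a, u⟫ : ℝ) * g u) x := by
  have h := VectorFourier.hasFDerivAt_fourierIntegral (LL V) hg hg1 x
  rw [← FI_eq] at h
  refine ⟨_, h, fun a => ?_⟩
  have hint : Integrable (VectorFourier.fourierSMulRight (LL V) g) := by
    refine Integrable.mono' (hg1.const_mul (2 * Real.pi * ‖LL V‖)) hg.1.fourierSMulRight ?_
    refine Filter.Eventually.of_forall fun v => ?_
    have := VectorFourier.norm_fourierSMulRight_le (LL V) g v
    linarith
  rw [FI_eq, Real.fourierIntegral_continuousLinearMap_apply' hint]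
  congr 1
  ext u
  rw [VectorFourier.fourierSMulRight_apply]
  rw [LL_apply, smul_eq_mul, real_inner_comm]
  have : (Real.pi : ℂ) ≠ 0 := by exact_mod_cast Real.pi_ne_zero
  rw [Complex.real_smul]
  push_cast
  field_simp

lemma FI_fderiv (g : V → ℂ) (hg : Integrable g) (hg1 : Integrable (fun u => ‖u‖ * ‖g u‖))
    (x a : V) : fderiv ℝ (FI g) x a = FI (fun u => Complex.I * (⟪a, u⟫ : ℝ) * g u) x := by
  obtain ⟨D, hD, h⟩ := FI_hasFDerivAt g hg hg1 x
  rw [hD.fderiv, h]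

lemma FI_contDiff (g : V → ℂ) (hg : ∀ n : ℕ, Integrable (fun u => ‖u‖ ^ n * ‖g u‖)) :
    ContDiff ℝ 2 (FI g) := by
  rw [FI_eq]
  exact VectorFourier.contDiff_fourierIntegral (LL V) (N := 2) (fun n _ => hg n)

lemma integrable_inner_mul (g : V → ℂ) (hg0 : AEStronglyMeasurable g volume)
    (a : V) (n : ℕ) (hg : Integrable (fun u => ‖u‖ ^ (n + 1) * ‖g u‖)) :
    Integrable (fun u => ‖u‖ ^ n * ‖Complex.I * (⟪a, u⟫ : ℝ) * g u‖) := by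
  refine Integrable.mono' (hg.const_mul ‖a‖) ?_ ?_
  · have : AEStronglyMeasurable (fun u => Complex.I * (⟪a, u⟫ : ℝ) * g u) volume := by
      refine AEStronglyMeasurable.mul (Continuous.aestronglyMeasurable (by fun_prop)) hg0
    exact (Continuous.aestronglyMeasurable (by fun_prop)).mul this.norm
  · refine Filter.Eventually.of_forall fun u => ?_
    have := abs_real_inner_le_norm a u
    simp only [norm_mul, Complex.norm_I, one_mul, Complex.norm_real, Real.norm_eq_abs, abs_norm,
      abs_pow, abs_abs]
    calc ‖u‖ ^ n * (|⟪a, u⟫| * ‖g u‖) ≤ ‖u‖ ^ n * (‖a‖ * ‖u‖ * ‖g u‖) := by gcongr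
      _ = _ := by ring

lemma FI_fderiv2 (g : V → ℂ) (hg0 : AEStronglyMeasurable g volume)
    (hg : ∀ n : ℕ, Integrable (fun u => ‖u‖ ^ n * ‖g u‖))
    (a b x : V) : fderiv ℝ (fun z => fderiv ℝ (FI g) z a) x b =
      - FI (fun u => ((⟪a, u⟫ * ⟪b, u⟫ : ℝ) : ℂ) * g u) x := by
  have hi : ∀ g : V → ℂ, AEStronglyMeasurable g volume →
      (∀ n : ℕ, Integrable (fun u => ‖u‖ ^ n * ‖g u‖)) → Integrable g := by
    intro g hg0 hg
    have := hg 0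
    simp only [pow_zero, one_mul] at this
    exact (integrable_norm_iff hg0).1 this
  have h1 : (fun z => fderiv ℝ (FI g) z a) = FI (fun u => Complex.I * (⟪a, u⟫ : ℝ) * g u) := by
    ext z
    exact FI_fderiv g (hi g hg0 hg) (by simpa using hg 1) z a
  have hm : AEStronglyMeasurable (fun u => Complex.I * (⟪a, u⟫ : ℝ) * g u) volume :=
    AEStronglyMeasurable.mul (Continuous.aestronglyMeasurable (by fun_prop)) hg0
  have hk := fun n => integrable_inner_mul g hg0 a n (hg (n + 1))
  rw [h1, FI_fderiv _ (hi _ hm hk) (by simpa using hk 1)]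
  unfold FI
  rw [← integral_neg]
  congr 1
  ext u
  have := Complex.I_mul_I
  push_cast
  linear_combination (Complex.exp (Complex.I * ⟪x, u⟫) * ⟪a, u⟫ * ⟪b, u⟫ * g u) * this

end Fourier

section Gaussian

variable {V : Type*} [NormedAddCommGroup V] [InnerProductSpace ℝ V] [FiniteDimensional ℝ V]
  [MeasurableSpace V] [BorelSpace V]

lemma integrable_pow_exp [Nontrivial V] (n : ℕ) {p b : ℝ} (hp : 0 < p) (hb : 0 < b) :
    Integrable (fun u : V => ‖u‖ ^ n * Real.exp (-b * ‖u‖ ^ p)) := by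
  rw [integrable_fun_norm_addHaar (μ := (volume : Measure V))
    (f := fun r => r ^ n * Real.exp (-b * r ^ p))]
  have h := integrableOn_rpow_mul_exp_neg_mul_rpow (p := p)
    (s := ((Module.finrank ℝ V - 1 + n : ℕ) : ℝ)) (b := b)
    (by have : (0:ℝ) ≤ ((Module.finrank ℝ V - 1 + n : ℕ) : ℝ) := by positivity
        linarith) hp hb
  refine h.congr_fun ?_ measurableSet_Ioi
  intro r hr
  simp only [Real.rpow_natCast, smul_eq_mul, pow_add, mul_assoc]

lemma integrable_pow_gauss [Nontrivial V] (n : ℕ) {b : ℝ} (hb : 0 < b) :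
    Integrable (fun u : V => ‖u‖ ^ n * Real.exp (-b * ‖u‖ ^ 2)) := by
  have := integrable_pow_exp (V := V) n (p := 2) two_pos hb
  simpa using this

lemma FI_gauss {s : ℝ} (hs : 0 < s) (x : V) :
    FI (fun u => ((Real.exp (-s * ‖u‖ ^ 2) : ℝ) : ℂ)) x =
      ((Real.sqrt (Real.pi / s) ^ (Module.finrank ℝ V) * Real.exp (-(4 * s)⁻¹ * ‖x‖ ^ 2) : ℝ) : ℂ) := by
  have h := GaussianFourier.integral_cexp_neg_mul_sq_norm_add (b := (s : ℂ)) (by simpa using hs)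
    Complex.I x
  have h2 : FI (fun u => ((Real.exp (-s * ‖u‖ ^ 2) : ℝ) : ℂ)) x =
      ∫ v : V, Complex.exp (-(s : ℂ) * ‖v‖ ^ 2 + Complex.I * (⟪x, v⟫ : ℝ)) := by
    unfold FI
    congr 1
    ext u
    rw [add_comm, Complex.exp_add]
    push_cast
    rfl
  rw [h2, h]
  push_cast
  congr 1
  · have hps : 0 ≤ Real.pi / s := by positivity
    have : ((Real.pi / s : ℝ) : ℂ) ^ (((Module.finrank ℝ V : ℝ) / 2 : ℝ) : ℂ) =
        ((Real.sqrt (Real.pi / s) ^ (Module.finrank ℝ V) : ℝ) : ℂ) := by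
      rw [← Complex.ofReal_cpow hps, Real.sqrt_eq_rpow, ← Real.rpow_natCast, ← Real.rpow_mul hps]
      congr 2
      ring
    push_cast at this
    exact this
  · congr 1
    rw [Complex.I_sq]
    have : (s : ℂ) ≠ 0 := by exact_mod_cast hs.ne'
    field_simp

lemma gauss_fderiv (c k : ℝ) (x a : V) :
    HasFDerivAt (fun z : V => ((c * Real.exp (-k * ‖z‖ ^ 2) : ℝ) : ℂ))
      (Complex.ofRealCLM.comp ((c * Real.exp (-k * ‖x‖ ^ 2) * (-k)) • ((2 : ℝ) • innerSL ℝ x))) x := by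
  refine Complex.ofRealCLM.hasFDerivAt.comp x ?_
  have h := (((hasStrictFDerivAt_norm_sq x).hasFDerivAt.const_mul (-k)).exp).const_mul c
  have e : (c * Real.exp (-k * ‖x‖ ^ 2) * (-k)) • ((2 : ℝ) • innerSL ℝ x) =
      c • Real.exp (-k * ‖x‖ ^ 2) • (-k) • (2 • innerSL ℝ x) := by
    ext y
    simp
    ring
  rw [e]
  exact h

lemma gauss_fderiv2 (c k : ℝ) (x a b : V) :
    fderiv ℝ (fun z => fderiv ℝ (fun z : V => ((c * Real.exp (-k * ‖z‖ ^ 2) : ℝ) : ℂ)) z a) x b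
      = ((c * Real.exp (-k * ‖x‖ ^ 2) * (4 * k ^ 2 * ⟪x, a⟫ * ⟪x, b⟫ - 2 * k * ⟪a, b⟫) : ℝ) : ℂ) := by
  have h1 : (fun z => fderiv ℝ (fun z : V => ((c * Real.exp (-k * ‖z‖ ^ 2) : ℝ) : ℂ)) z a) =
      fun z => ((c * Real.exp (-k * ‖z‖ ^ 2) : ℝ) : ℂ) * ((-2 * k * ⟪a, z⟫ : ℝ) : ℂ) := by
    ext z
    rw [(gauss_fderiv c k z a).fderiv]
    simp [real_inner_comm]
    ring
  rw [h1]
  have h2 : HasFDerivAt (fun z : V => ((-2 * k * ⟪a, z⟫ : ℝ) : ℂ))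
      (Complex.ofRealCLM.comp ((-2 * k) • innerSL ℝ a)) x := by
    refine Complex.ofRealCLM.hasFDerivAt.comp x ?_
    exact ((innerSL ℝ a).hasFDerivAt).const_mul (-2 * k)
  have h3 := (gauss_fderiv c k x a).fun_mul h2
  rw [HasFDerivAt.fderiv h3]
  simp [real_inner_comm]
  ring

/-- Gaussian profile dominating the second derivatives. -/
noncomputable def Bprof (V : Type*) [NormedAddCommGroup V] [InnerProductSpace ℝ V] (z : V) : ℝ :=
  Real.sqrt Real.pi ^ (Module.finrank ℝ V) *
    ((1 / 2 + ‖z‖ ^ 2 / 4) * Real.exp (-(1 / 4) * ‖z‖ ^ 2))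

lemma Bprof_integrable [Nontrivial V] : Integrable (Bprof V) := by
  unfold Bprof
  refine Integrable.const_mul ?_ _
  have h0 := (integrable_pow_gauss (V := V) 0 (b := 1 / 4) (by norm_num)).const_mul (1 / 2)
  have h2 := (integrable_pow_gauss (V := V) 2 (b := 1 / 4) (by norm_num)).const_mul (1 / 4)
  refine (h0.add h2).congr (Filter.Eventually.of_forall fun z => ?_)
  simp only [Pi.add_apply]
  ring

lemma Bprof_nonneg (z : V) : 0 ≤ Bprof V z := by
  unfold Bprof
  positivity

lemma H_bound [Nontrivial V] {s : ℝ} (hs : 0 < s) (a b x : V) (ha : ‖a‖ ≤ 1) (hb : ‖b‖ ≤ 1) :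
    ‖FI (fun u => ((⟪a, u⟫ * ⟪b, u⟫ : ℝ) : ℂ) * ((Real.exp (-s * ‖u‖ ^ 2) : ℝ) : ℂ)) x‖ ≤
      s⁻¹ * ((Real.sqrt s)⁻¹ ^ (Module.finrank ℝ V) * Bprof V ((Real.sqrt s)⁻¹ • x)) := by
  have h := FI_fderiv2 (fun u : V => ((Real.exp (-s * ‖u‖ ^ 2) : ℝ) : ℂ))
    (Continuous.aestronglyMeasurable (by fun_prop))
    (fun n => by
      refine (integrable_pow_gauss (V := V) n hs).congr (Filter.Eventually.of_forall fun z => ?_)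
      simp only [Complex.norm_real, Real.norm_eq_abs, Real.abs_exp]) a b x
  have hfun : FI (fun u : V => ((Real.exp (-s * ‖u‖ ^ 2) : ℝ) : ℂ)) = _ := funext (FI_gauss hs)
  rw [hfun, gauss_fderiv2] at h
  rw [← norm_neg, ← h, Complex.norm_real, Real.norm_eq_abs, abs_mul]
  have hss : (Real.sqrt s) ^ 2 = s := Real.sq_sqrt hs.le
  have hsp : 0 < Real.sqrt s := Real.sqrt_pos.2 hs
  have e1 : ‖(Real.sqrt s)⁻¹ • x‖ ^ 2 = s⁻¹ * ‖x‖ ^ 2 := by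
    rw [norm_smul, mul_pow, Real.norm_eq_abs, abs_of_pos (by positivity), inv_pow, hss]
  unfold Bprof
  rw [e1, abs_of_nonneg (by positivity), Real.sqrt_div Real.pi_pos.le, div_pow]
  have e2 : Real.exp (-(4 * s)⁻¹ * ‖x‖ ^ 2) = Real.exp (-(1 / 4) * (s⁻¹ * ‖x‖ ^ 2)) := by
    congr 1
    field_simp
  rw [e2]
  have hab := abs_real_inner_le_norm a b
  have hxa := abs_real_inner_le_norm x a
  have hxb := abs_real_inner_le_norm x b
  have e3 : |4 * (4 * s)⁻¹ ^ 2 * ⟪x, a⟫ * ⟪x, b⟫ - 2 * (4 * s)⁻¹ * ⟪a, b⟫| ≤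
      s⁻¹ * (1 / 2 + s⁻¹ * ‖x‖ ^ 2 / 4) := by
    have i1 : |⟪a, b⟫| ≤ 1 := hab.trans (by nlinarith [norm_nonneg a, norm_nonneg b])
    have i2 : |⟪x, a⟫| ≤ ‖x‖ := hxa.trans (by nlinarith [norm_nonneg x])
    have i3 : |⟪x, b⟫| ≤ ‖x‖ := hxb.trans (by nlinarith [norm_nonneg x])
    have i4 : |⟪x, a⟫| * |⟪x, b⟫| ≤ ‖x‖ * ‖x‖ := by gcongr
    have hs1 : 0 < s⁻¹ := by positivity
    calc _ ≤ |4 * (4 * s)⁻¹ ^ 2 * ⟪x, a⟫ * ⟪x, b⟫| + |2 * (4 * s)⁻¹ * ⟪a, b⟫| := abs_sub _ _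
      _ = (1 / 4) * s⁻¹ ^ 2 * (|⟪x, a⟫| * |⟪x, b⟫|) + (1 / 2) * s⁻¹ * |⟪a, b⟫| := by
        have : (4 * s)⁻¹ = 1 / 4 * s⁻¹ := by field_simp
        rw [this]
        simp only [abs_mul, abs_pow, abs_of_pos hs1]
        norm_num
        ring
      _ ≤ (1 / 4) * s⁻¹ ^ 2 * (‖x‖ * ‖x‖) + (1 / 2) * s⁻¹ * 1 := by gcongr
      _ = _ := by ring
  calc _ ≤ Real.sqrt Real.pi ^ Module.finrank ℝ V / Real.sqrt s ^ Module.finrank ℝ V *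
        Real.exp (-(1 / 4) * (s⁻¹ * ‖x‖ ^ 2)) * (s⁻¹ * (1 / 2 + s⁻¹ * ‖x‖ ^ 2 / 4)) := by gcongr
    _ = _ := by
      rw [inv_pow]
      field_simp

lemma H_lintegral [Nontrivial V] {s : ℝ} (hs : 0 < s) (a b : V) (ha : ‖a‖ ≤ 1) (hb : ‖b‖ ≤ 1) :
    ∫⁻ x, ‖FI (fun u => ((⟪a, u⟫ * ⟪b, u⟫ : ℝ) : ℂ) * ((Real.exp (-s * ‖u‖ ^ 2) : ℝ) : ℂ)) x‖ₑ ≤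
      ENNReal.ofReal (s⁻¹ * ∫ z, Bprof V z) := by
  have hsp : 0 < Real.sqrt s := Real.sqrt_pos.2 hs
  have hi : Integrable (fun x => s⁻¹ * ((Real.sqrt s)⁻¹ ^ (Module.finrank ℝ V) *
      Bprof V ((Real.sqrt s)⁻¹ • x))) :=
    ((Bprof_integrable.comp_smul (inv_ne_zero hsp.ne')).const_mul _).const_mul _
  calc _ ≤ ∫⁻ x, ENNReal.ofReal (s⁻¹ * ((Real.sqrt s)⁻¹ ^ (Module.finrank ℝ V) *
      Bprof V ((Real.sqrt s)⁻¹ • x))) := by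
        refine lintegral_mono fun x => ?_
        rw [← ofReal_norm]
        exact ENNReal.ofReal_le_ofReal (H_bound hs a b x ha hb)
    _ = ENNReal.ofReal (∫ x, s⁻¹ * ((Real.sqrt s)⁻¹ ^ (Module.finrank ℝ V) *
      Bprof V ((Real.sqrt s)⁻¹ • x))) := by
        rw [ofReal_integral_eq_lintegral_ofReal hi]
        refine Filter.Eventually.of_forall fun x => ?_
        have := Bprof_nonneg ((Real.sqrt s)⁻¹ • x)
        positivity
    _ = _ := by
      rw [integral_const_mul, integral_const_mul, Measure.integral_comp_smul]
      congr 2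
      rw [abs_of_pos (by positivity), smul_eq_mul]
      field_simp

end Gaussian

section Core

open scoped NNReal

variable {V : Type*} [NormedAddCommGroup V] [InnerProductSpace ℝ V] [FiniteDimensional ℝ V]
  [MeasurableSpace V] [BorelSpace V]

/-- The characters of the monoid `ℝ≥0 × V × ℕ` that we use. -/
noncomputable def chi (u : V) (g : ℝ≥0 × V × ℕ) : ℂ :=
  ((Real.exp (-(g.1 : ℝ) * ‖u‖ ^ 2) : ℝ) : ℂ) *
    (Complex.exp (Complex.I * (⟪u, g.2.1⟫ : ℝ)) * (-1) ^ g.2.2)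

lemma chi_meas : Measurable (fun p : V × (ℝ≥0 × V × ℕ) => chi p.1 p.2) := by
  unfold chi
  refine Measurable.mul (by fun_prop) (Measurable.mul (by fun_prop) ?_)
  exact (measurable_from_top (f := fun n : ℕ => ((-1 : ℂ)) ^ n)).comp
    (measurable_snd.comp (measurable_snd.comp measurable_snd))

lemma norm_expI (r : ℝ) : ‖Complex.exp (Complex.I * (r : ℂ))‖ = 1 := by
  rw [mul_comm]; exact Complex.norm_exp_ofReal_mul_I r

lemma chi_norm (u : V) (g : ℝ≥0 × V × ℕ) :
    ‖chi u g‖ = Real.exp (-(g.1 : ℝ) * ‖u‖ ^ 2) := by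
  unfold chi
  rw [norm_mul, norm_mul, norm_expI, norm_pow, norm_neg, norm_one, one_pow,
    Complex.norm_real, Real.norm_eq_abs, Real.abs_exp]
  ring

lemma chi_norm_le (u : V) (g : ℝ≥0 × V × ℕ) : ‖chi u g‖ ≤ 1 := by
  rw [chi_norm, Real.exp_le_one_iff]
  have : 0 ≤ (g.1 : ℝ) * ‖u‖ ^ 2 := by positivity
  linarith

lemma exists_M (ω : Measure ℝ≥0) [IsFiniteMeasure ω] (k : Measure V) [IsFiniteMeasure k] :
    ∃ M : Measure (ℝ≥0 × V × ℕ), IsFiniteMeasure M ∧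
      (∀ u : V, ∫ g, chi u g ∂M =
        Complex.exp ((∫ s : ℝ≥0, ((Real.exp (-(s : ℝ) * ‖u‖ ^ 2) : ℝ) : ℂ) ∂ω) -
          ∫ y, Complex.exp (Complex.I * (⟪u, y⟫ : ℝ)) ∂k)) ∧
      (∀ l : ℝ, 0 ≤ l → ∫ g, Real.exp (-(g.1 : ℝ) * l) ∂M =
        Real.exp ((∫ s : ℝ≥0, Real.exp (-(s : ℝ) * l) ∂ω) + k.real Set.univ)) := by
  have m1 : Measurable (fun s : ℝ≥0 => (s, (0 : V), (0 : ℕ))) := by fun_prop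
  have m2 : Measurable (fun y : V => ((0 : ℝ≥0), y, (1 : ℕ))) := by fun_prop
  let μ : Measure (ℝ≥0 × V × ℕ) := ω.map (fun s => (s, (0 : V), (0 : ℕ))) +
    k.map (fun y => ((0 : ℝ≥0), y, (1 : ℕ)))
  obtain ⟨M, hM, h⟩ := exists_expMeasure μ
  have hμ : ∀ χ : ℝ≥0 × V × ℕ → ℂ, Measurable χ → (∀ g, ‖χ g‖ ≤ 1) →
      ∫ g, χ g ∂μ = (∫ s, χ (s, 0, 0) ∂ω) + ∫ y, χ (0, y, 1) ∂k := by
    intro χ hm hb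
    have hi : ∀ ν : Measure (ℝ≥0 × V × ℕ), IsFiniteMeasure ν → Integrable χ ν := fun ν _ =>
      Integrable.of_bound hm.aestronglyMeasurable 1 (Filter.Eventually.of_forall hb)
    simp only [μ]
    rw [integral_add_measure (hi _ inferInstance) (hi _ inferInstance),
      integral_map m1.aemeasurable hm.aestronglyMeasurable,
      integral_map m2.aemeasurable hm.aestronglyMeasurable]
  refine ⟨M, hM, fun u => ?_, fun l hl => ?_⟩
  · have hm : Measurable (chi u) := chi_meas.comp measurable_prodMk_left
    rw [h (chi u) hm (chi_norm_le u) (by simp [chi]) ?_, hμ _ hm (chi_norm_le u)]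
    · simp [chi, integral_neg, sub_eq_add_neg]
    · intro a b
      simp only [chi, Prod.fst_add, Prod.snd_add, inner_add_right, pow_add, NNReal.coe_add]
      push_cast
      rw [neg_add, add_mul, Complex.exp_add, mul_add, Complex.exp_add]
      ring
  · let χ : ℝ≥0 × V × ℕ → ℂ := fun g => ((Real.exp (-(g.1 : ℝ) * l) : ℝ) : ℂ)
    have hm : Measurable χ := by fun_prop
    have hb : ∀ g, ‖χ g‖ ≤ 1 := by
      intro g
      simp only [χ]
      rw [Complex.norm_real, Real.norm_eq_abs, Real.abs_exp, Real.exp_le_one_iff]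
      have : 0 ≤ (g.1 : ℝ) * l := by positivity
      linarith
    have h1 := h χ hm hb (by simp [χ]) ?_
    · rw [hμ χ hm hb] at h1
      simp only [χ] at h1
      rw [integral_complex_ofReal, integral_complex_ofReal] at h1
      simp only [NNReal.coe_zero, neg_zero, zero_mul, Real.exp_zero, Complex.ofReal_one,
        integral_const, Complex.real_smul, mul_one] at h1
      exact_mod_cast h1
    · intro a b
      simp only [χ, Prod.fst_add, NNReal.coe_add]
      rw [neg_add, add_mul, Real.exp_add]
      push_cast
      rfl

lemma core_bound [Nontrivial V] (M : Measure (ℝ≥0 × V × ℕ)) [IsFiniteMeasure M]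
    {δ : ℝ} (hδ : 0 < δ) (a b : V) (ha : ‖a‖ ≤ 1) (hb : ‖b‖ ≤ 1) :
    ∫⁻ x, ‖FI (fun u => ((⟪a, u⟫ * ⟪b, u⟫ : ℝ) : ℂ) *
        (((Real.exp (-δ * ‖u‖ ^ 2) : ℝ) : ℂ) * ∫ g, chi u g ∂M)) x‖ₑ ≤
      ENNReal.ofReal (∫ z, Bprof V z) * ∫⁻ l in Set.Ioi (0 : ℝ),
        ENNReal.ofReal (Real.exp (-δ * l) * ∫ g, Real.exp (-(g.1 : ℝ) * l) ∂M) := by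
  let H : ℝ → V → ℂ := fun s x =>
    FI (fun u => ((⟪a, u⟫ * ⟪b, u⟫ : ℝ) : ℂ) * ((Real.exp (-s * ‖u‖ ^ 2) : ℝ) : ℂ)) x
  have hHm : Measurable (fun p : V × (ℝ≥0 × V × ℕ) => H (δ + (p.2.1 : ℝ)) (p.1 + p.2.2.1)) := by
    simp only [H, FI]
    refine StronglyMeasurable.measurable ?_
    refine StronglyMeasurable.integral_prod_right' (ν := (volume : Measure V))
      (f := fun q : (V × (ℝ≥0 × V × ℕ)) × V =>
        Complex.exp (Complex.I * (⟪q.1.1 + q.1.2.2.1, q.2⟫ : ℝ)) *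
          (((⟪a, q.2⟫ * ⟪b, q.2⟫ : ℝ) : ℂ) *
            ((Real.exp (-(δ + (q.1.2.1 : ℝ)) * ‖q.2‖ ^ 2) : ℝ) : ℂ))) ?_
    refine Measurable.stronglyMeasurable ?_
    fun_prop
  have hrep : ∀ x, FI (fun u => ((⟪a, u⟫ * ⟪b, u⟫ : ℝ) : ℂ) *
        (((Real.exp (-δ * ‖u‖ ^ 2) : ℝ) : ℂ) * ∫ g, chi u g ∂M)) x =
      ∫ g, (-1) ^ g.2.2 * H (δ + (g.1 : ℝ)) (x + g.2.1) ∂M := by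
    intro x
    let F : V → (ℝ≥0 × V × ℕ) → ℂ := fun u g =>
      (Complex.exp (Complex.I * (⟪x, u⟫ : ℝ)) * (((⟪a, u⟫ * ⟪b, u⟫ : ℝ) : ℂ) *
        ((Real.exp (-δ * ‖u‖ ^ 2) : ℝ) : ℂ))) * chi u g
    have hFi : Integrable (Function.uncurry F) ((volume : Measure V).prod M) := by
      have hbd : Integrable (fun p : V × (ℝ≥0 × V × ℕ) =>
          (‖p.1‖ ^ 2 * Real.exp (-δ * ‖p.1‖ ^ 2)) * 1) ((volume : Measure V).prod M) :=
        (integrable_pow_gauss (V := V) 2 hδ).mul_prod (integrable_const 1)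
      refine hbd.mono' ?_ (Filter.Eventually.of_forall ?_)
      · refine Measurable.aestronglyMeasurable ?_
        simp only [F, Function.uncurry_def]
        exact Measurable.mul (by fun_prop) chi_meas
      · rintro ⟨u, g⟩
        simp only [F, Function.uncurry_apply_pair]
        rw [norm_mul, norm_mul, norm_expI, norm_mul, Complex.norm_real, Complex.norm_real,
          Real.norm_eq_abs, Real.norm_eq_abs, Real.abs_exp, one_mul]
        refine mul_le_mul ?_ (chi_norm_le u g) (norm_nonneg _) (by positivity)
        refine mul_le_mul_of_nonneg_right ?_ (by positivity)
        rw [abs_mul]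
        have h1 : |⟪a, u⟫| ≤ ‖u‖ :=
          (abs_real_inner_le_norm a u).trans (by nlinarith [norm_nonneg u])
        have h2 : |⟪b, u⟫| ≤ ‖u‖ :=
          (abs_real_inner_le_norm b u).trans (by nlinarith [norm_nonneg u])
        rw [pow_two]
        gcongr
    have h1 := integral_integral_swap hFi
    have h2 : FI (fun u => ((⟪a, u⟫ * ⟪b, u⟫ : ℝ) : ℂ) *
        (((Real.exp (-δ * ‖u‖ ^ 2) : ℝ) : ℂ) * ∫ g, chi u g ∂M)) x = ∫ u, ∫ g, F u g ∂M := by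
      unfold FI
      congr 1
      ext u
      simp only [F]
      rw [integral_const_mul]
      ring
    rw [h2, h1]
    congr 1
    ext g
    simp only [F, H, FI]
    rw [← integral_const_mul]
    congr 1
    ext u
    rw [inner_add_left, real_inner_comm u g.2.1]
    simp only [chi]
    rw [neg_add, add_mul, Real.exp_add, Complex.ofReal_add, mul_add, Complex.exp_add]
    push_cast
    ring
  have hle : ∀ x, ‖FI (fun u => ((⟪a, u⟫ * ⟪b, u⟫ : ℝ) : ℂ) *
        (((Real.exp (-δ * ‖u‖ ^ 2) : ℝ) : ℂ) * ∫ g, chi u g ∂M)) x‖ₑ ≤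
      ∫⁻ g, ‖H (δ + (g.1 : ℝ)) (x + g.2.1)‖ₑ ∂M := by
    intro x
    rw [hrep]
    refine (enorm_integral_le_lintegral_enorm _).trans (le_of_eq ?_)
    congr 1
    ext g
    rw [enorm_mul, enorm_pow, enorm_neg, enorm_one, one_pow, one_mul]
  calc _ ≤ ∫⁻ x, ∫⁻ g, ‖H (δ + (g.1 : ℝ)) (x + g.2.1)‖ₑ ∂M := lintegral_mono hle
    _ = ∫⁻ g, (∫⁻ x, ‖H (δ + (g.1 : ℝ)) (x + g.2.1)‖ₑ) ∂M :=
        lintegral_lintegral_swap hHm.enorm.aemeasurable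
    _ ≤ ∫⁻ g, ENNReal.ofReal (∫ z, Bprof V z) *
          (∫⁻ l in Set.Ioi (0 : ℝ), ENNReal.ofReal (Real.exp (-(δ + (g.1 : ℝ)) * l))) ∂M := by
        refine lintegral_mono fun g => ?_
        rw [lintegral_add_right_eq_self (fun x => ‖H (δ + (g.1 : ℝ)) x‖ₑ) g.2.1]
        have hp : 0 < δ + (g.1 : ℝ) := by positivity
        refine (H_lintegral hp a b ha hb).trans (le_of_eq ?_)
        have hnn : 0 ≤ ∫ z, Bprof V z := integral_nonneg Bprof_nonneg
        rw [mul_comm, ENNReal.ofReal_mul hnn]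
        congr 1
        rw [← ofReal_integral_eq_lintegral_ofReal
          (integrableOn_exp_mul_Ioi (by linarith) 0) (Filter.Eventually.of_forall fun x =>
            (Real.exp_pos _).le), integral_exp_mul_Ioi (by linarith) 0]
        congr 1
        rw [mul_zero, Real.exp_zero, neg_div_neg_eq, one_div]
    _ = ENNReal.ofReal (∫ z, Bprof V z) * ∫⁻ g,
          (∫⁻ l in Set.Ioi (0 : ℝ), ENNReal.ofReal (Real.exp (-(δ + (g.1 : ℝ)) * l))) ∂M := by
        rw [lintegral_const_mul' _ _ ENNReal.ofReal_ne_top]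
    _ = ENNReal.ofReal (∫ z, Bprof V z) * ∫⁻ l in Set.Ioi (0 : ℝ),
          (∫⁻ g, ENNReal.ofReal (Real.exp (-(δ + (g.1 : ℝ)) * l)) ∂M) := by
        rw [lintegral_lintegral_swap]
        exact Measurable.aemeasurable (by fun_prop)
    _ = _ := by
        congr 1
        refine setLIntegral_congr_fun measurableSet_Ioi fun l hl => ?_
        have hl' : (0 : ℝ) < l := hl
        rw [← integral_const_mul, ofReal_integral_eq_lintegral_ofReal]
        · congr 1
          ext g
          rw [neg_add, add_mul, Real.exp_add]
        · refine Integrable.const_mul ?_ _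
          refine Integrable.of_bound (Measurable.aestronglyMeasurable (by fun_prop)) 1
            (Filter.Eventually.of_forall fun g => ?_)
          rw [Real.norm_eq_abs, Real.abs_exp, Real.exp_le_one_iff]
          have : 0 ≤ (g.1 : ℝ) * l := by positivity
          linarith
        · exact Filter.Eventually.of_forall fun g => by positivity

end Core

section Levy

lemma wd_aux {X : Type*} [MeasurableSpace X] (m : Measure X) (ρ : X → ℝ) (hm : Measurable ρ)
    (hi : Integrable ρ m) (hn : ∀ᵐ x ∂m, 0 ≤ ρ x) :
    IsFiniteMeasure (m.withDensity (fun x => ENNReal.ofReal (ρ x))) ∧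
    ∀ {F : Type} [NormedAddCommGroup F] [NormedSpace ℝ F] (f : X → F),
      ∫ x, f x ∂(m.withDensity (fun x => ENNReal.ofReal (ρ x))) = ∫ x, ρ x • f x ∂m := by
  refine ⟨isFiniteMeasure_withDensity_ofReal hi.2, ?_⟩
  intro F _ _ f
  rw [integral_withDensity_eq_integral_toReal_smul (by fun_prop)
    (Filter.Eventually.of_forall fun _ => ENNReal.ofReal_lt_top)]
  refine integral_congr_ae ?_
  filter_upwards [hn] with x hx
  rw [ENNReal.toReal_ofReal hx]

variable {V : Type*} [NormedAddCommGroup V] [InnerProductSpace ℝ V] [FiniteDimensional ℝ V]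
  [MeasurableSpace V] [BorelSpace V]

lemma radial_integrable [Nontrivial V] {α : ℝ} (hα1 : 1 < α) (hα2 : α < 2) :
    Integrable (fun y : V => min (‖y‖ ^ 2) 1 / ‖y‖ ^ ((Module.finrank ℝ V : ℝ) + α)) := by
  rw [integrable_fun_norm_addHaar (μ := (volume : Measure V))
    (f := fun r => min (r ^ 2) 1 / r ^ ((Module.finrank ℝ V : ℝ) + α))]
  have hn : 1 ≤ Module.finrank ℝ V := Module.finrank_pos
  rw [← Set.Ioc_union_Ioi_eq_Ioi zero_le_one]
  have key : ∀ r : ℝ, 0 < r → r ^ (Module.finrank ℝ V - 1) / r ^ ((Module.finrank ℝ V : ℝ) + α) =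
      r ^ (-1 - α) := by
    intro r hr
    rw [← Real.rpow_natCast, ← Real.rpow_sub hr, Nat.cast_sub hn]
    congr 1
    push_cast
    ring
  refine IntegrableOn.union ?_ ?_
  · have h : IntegrableOn (fun r : ℝ => r ^ (1 - α)) (Set.Ioc 0 1) := by
      have := intervalIntegral.intervalIntegrable_rpow' (a := 0) (b := 1) (r := 1 - α) (by linarith)
      rwa [intervalIntegrable_iff_integrableOn_Ioc_of_le zero_le_one] at this
    refine h.congr_fun ?_ measurableSet_Ioc
    intro r hr
    simp only [smul_eq_mul]
    rw [min_eq_left (by nlinarith [hr.1, hr.2]), mul_div_left_comm, key r hr.1,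
      ← Real.rpow_natCast, ← Real.rpow_add hr.1]
    congr 1
    push_cast
    ring
  · have h : IntegrableOn (fun r : ℝ => r ^ (-1 - α)) (Set.Ioi 1) :=
      integrableOn_Ioi_rpow_of_lt (by linarith) one_pos
    refine h.congr_fun ?_ measurableSet_Ioi
    intro r hr
    have hr' : (1 : ℝ) < r := hr
    simp only [smul_eq_mul]
    rw [min_eq_right (by nlinarith), mul_one_div, key r (by linarith)]

lemma one_sub_cos_le (z : ℝ) : 1 - Real.cos z ≤ z ^ 2 / 2 := by
  have := Real.one_sub_sq_div_two_le_cos (x := z)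
  linarith

lemma levy_integrable [Nontrivial V] {α : ℝ} (hα1 : 1 < α) (hα2 : α < 2) (u : V) :
    Integrable (fun y : V => (1 - Real.cos ⟪u, y⟫) / ‖y‖ ^ ((Module.finrank ℝ V : ℝ) + α)) := by
  refine ((radial_integrable (V := V) hα1 hα2).const_mul (2 + ‖u‖ ^ 2)).mono'
    (Measurable.aestronglyMeasurable (by fun_prop)) (Filter.Eventually.of_forall fun y => ?_)
  have h1 := one_sub_cos_le ⟪u, y⟫
  have h2 := Real.neg_one_le_cos ⟪u, y⟫
  have h3 := Real.cos_le_one ⟪u, y⟫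
  have h4 := abs_real_inner_le_norm u y
  have h5 : ⟪u, y⟫ ^ 2 ≤ ‖u‖ ^ 2 * ‖y‖ ^ 2 := by
    rw [← mul_pow, ← sq_abs]
    gcongr
  have h6 : 0 ≤ ‖u‖ ^ 2 := by positivity
  have h7 : 0 ≤ ‖y‖ ^ 2 := by positivity
  rw [Real.norm_eq_abs, abs_of_nonneg (div_nonneg (by linarith) (by positivity)), ← mul_div_assoc]
  refine div_le_div_of_nonneg_right ?_ (by positivity)
  rcases min_cases (‖y‖ ^ 2) 1 with ⟨h, _⟩ | ⟨h, _⟩ <;> rw [h] <;> nlinarith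

/-- Full (untruncated) stable exponent. -/
noncomputable def Sfull (V : Type*) [NormedAddCommGroup V] [InnerProductSpace ℝ V]
    [MeasurableSpace V] [BorelSpace V] [FiniteDimensional ℝ V] (α : ℝ) (u : V) : ℝ :=
  ∫ y : V, (1 - Real.cos ⟪u, y⟫) / ‖y‖ ^ ((Module.finrank ℝ V : ℝ) + α)

lemma Sfull_rot (α : ℝ) (u v : V) (h : ‖u‖ = ‖v‖) : Sfull V α u = Sfull V α v := by
  let R := (Submodule.span ℝ {u - v})ᗮ.reflection
  have hR : R u = v := Submodule.reflection_sub h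
  unfold Sfull
  rw [← hR, ← (R.measurePreserving).integral_comp R.toHomeomorph.measurableEmbedding
    (fun y => (1 - Real.cos ⟪R u, y⟫) / ‖y‖ ^ ((Module.finrank ℝ V : ℝ) + α))]
  simp only [LinearIsometryEquiv.inner_map_map, LinearIsometryEquiv.norm_map]

lemma Sfull_smul (α : ℝ) (e : V) {r : ℝ} (hr : 0 < r) :
    Sfull V α (r • e) = r ^ α * Sfull V α e := by
  unfold Sfull
  have h : ∀ y : V, (1 - Real.cos ⟪r • e, y⟫) / ‖y‖ ^ ((Module.finrank ℝ V : ℝ) + α) =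
      r ^ ((Module.finrank ℝ V : ℝ) + α) * ((fun z : V => (1 - Real.cos ⟪e, z⟫) /
        ‖z‖ ^ ((Module.finrank ℝ V : ℝ) + α)) (r • y)) := by
    intro y
    simp only [norm_smul, Real.norm_eq_abs, abs_of_pos hr, real_inner_smul_left,
      real_inner_smul_right]
    rw [Real.mul_rpow hr.le (norm_nonneg _)]
    have : 0 < r ^ ((Module.finrank ℝ V : ℝ) + α) := by positivity
    rw [← mul_div_assoc, mul_div_mul_left _ _ this.ne']
  simp_rw [h]
  rw [integral_const_mul]
  have h' := Measure.integral_comp_smul (volume : Measure V) (fun z : V =>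
    (1 - Real.cos ⟪e, z⟫) / ‖z‖ ^ ((Module.finrank ℝ V : ℝ) + α)) r
  rw [h', smul_eq_mul, ← mul_assoc]
  congr 1
  rw [abs_of_pos (by positivity), Real.rpow_add hr, Real.rpow_natCast]
  field_simp

lemma Sfull_eq (α : ℝ) (hα : 0 < α) (e : V) (he : ‖e‖ = 1) (u : V) :
    Sfull V α u = Sfull V α e * ‖u‖ ^ α := by
  by_cases hu : u = 0
  · subst hu
    simp [Sfull, Real.zero_rpow hα.ne']
  · have hp : 0 < ‖u‖ := norm_pos_iff.2 hu
    rw [Sfull_rot α u (‖u‖ • e) (by simp [norm_smul, he]), Sfull_smul α e hp, mul_comm]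

lemma Sfull_pos [Nontrivial V] {α : ℝ} (hα1 : 1 < α) (hα2 : α < 2) (e : V) (he : ‖e‖ = 1) :
    0 < Sfull V α e := by
  unfold Sfull
  rw [integral_pos_iff_support_of_nonneg _ (levy_integrable hα1 hα2 e)]
  · have hc : Continuous (fun y : V => ⟪e, y⟫) := by fun_prop
    have ho : IsOpen {y : V | 0 < ⟪e, y⟫ ∧ ⟪e, y⟫ < 2} :=
      (isOpen_lt continuous_const hc).and (isOpen_lt hc continuous_const)
    have hne : {y : V | 0 < ⟪e, y⟫ ∧ ⟪e, y⟫ < 2}.Nonempty :=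
      ⟨e, by simp [he]⟩
    refine (ho.measure_pos volume hne).trans_le (measure_mono ?_)
    rintro y ⟨h1, h2⟩
    have hy : y ≠ 0 := by
      rintro rfl
      simp at h1
    have h3 : Real.cos ⟪e, y⟫ < Real.cos 0 :=
      Real.cos_lt_cos_of_nonneg_of_le_pi le_rfl (by linarith [Real.pi_gt_three]) h1
    rw [Real.cos_zero] at h3
    have hp : 0 < ‖y‖ := norm_pos_iff.2 hy
    have : 0 < (1 - Real.cos ⟪e, y⟫) / ‖y‖ ^ ((Module.finrank ℝ V : ℝ) + α) :=
      div_pos (by linarith) (by positivity)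
    exact this.ne'
  · intro y
    have := Real.cos_le_one ⟪e, y⟫
    exact div_nonneg (by linarith) (by positivity)

lemma exists_k [Nontrivial V] {α : ℝ} (hα1 : 1 < α) (hα2 : α < 2) :
    ∃ k : Measure V, IsFiniteMeasure k ∧ ∃ A : ℝ, 0 < A ∧ ∃ r : V → ℝ, Measurable r ∧ ∀ u,
      |r u| ≤ k.real Set.univ ∧ ∫ y, Complex.exp (Complex.I * (⟪u, y⟫ : ℝ)) ∂k = (r u : ℂ) ∧
      ∫ y in Metric.closedBall (0 : V) 1, (1 - Real.cos ⟪u, y⟫) /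
        ‖y‖ ^ ((Module.finrank ℝ V : ℝ) + α) = A * ‖u‖ ^ α - k.real Set.univ + r u := by
  obtain ⟨e, he⟩ : ∃ e : V, ‖e‖ = 1 := exists_norm_eq V zero_le_one
  set q : ℝ := (Module.finrank ℝ V : ℝ) + α with hq
  let kd : V → ℝ := (Metric.closedBall (0 : V) 1)ᶜ.indicator (fun y => 1 / ‖y‖ ^ q)
  have hkm : Measurable kd := Measurable.indicator (by fun_prop) (by measurability)
  have hkn : ∀ y, 0 ≤ kd y := fun y => Set.indicator_nonneg (fun y _ => by positivity) y
  have hki : Integrable kd := by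
    refine (radial_integrable (V := V) hα1 hα2).mono' hkm.aestronglyMeasurable
      (Filter.Eventually.of_forall fun y => ?_)
    rw [Real.norm_eq_abs, abs_of_nonneg (hkn y)]
    by_cases hy : y ∈ (Metric.closedBall (0 : V) 1)ᶜ
    · simp only [kd]
      rw [Set.indicator_of_mem hy]
      have h1 : 1 < ‖y‖ := by simpa using hy
      rw [min_eq_right (by nlinarith)]
    · simp only [kd]
      rw [Set.indicator_of_notMem hy]
      positivity
  have hkev : ∀ y, kd (-y) = kd y := by
    intro y
    simp only [kd, Set.indicator, Set.mem_compl_iff, Metric.mem_closedBall, dist_zero_right,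
      norm_neg]
  obtain ⟨hfin, hint⟩ := wd_aux volume kd hkm hki (Filter.Eventually.of_forall hkn)
  set k : Measure V := volume.withDensity (fun x => ENNReal.ofReal (kd x)) with hk
  have hci : ∀ u : V, Integrable (fun y => kd y * Real.cos ⟪u, y⟫) := fun u =>
    hki.mul_bdd (c := 1) (Measurable.aestronglyMeasurable (by fun_prop))
      (Filter.Eventually.of_forall fun y => Real.abs_cos_le_one _)
  have hsi : ∀ u : V, Integrable (fun y => kd y * Real.sin ⟪u, y⟫) := fun u =>
    hki.mul_bdd (c := 1) (Measurable.aestronglyMeasurable (by fun_prop))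
      (Filter.Eventually.of_forall fun y => Real.abs_sin_le_one _)
  have hκ : k.real Set.univ = ∫ y, kd y := by
    have := hint (F := ℝ) (fun _ => 1)
    simpa using this
  refine ⟨k, hfin, Sfull V α e, Sfull_pos hα1 hα2 e he, fun u => ∫ y, kd y * Real.cos ⟪u, y⟫,
    ?_, fun u => ⟨?_, ?_, ?_⟩⟩
  · refine StronglyMeasurable.measurable ?_
    refine StronglyMeasurable.integral_prod_right' (ν := (volume : Measure V))
      (f := fun p : V × V => kd p.2 * Real.cos ⟪p.1, p.2⟫) ?_
    exact Measurable.stronglyMeasurable (by fun_prop)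
  · rw [hκ, ← Real.norm_eq_abs]
    refine norm_integral_le_of_norm_le hki (Filter.Eventually.of_forall fun y => ?_)
    rw [norm_mul, Real.norm_eq_abs, Real.norm_eq_abs, abs_of_nonneg (hkn y)]
    exact mul_le_of_le_one_right (hkn y) (Real.abs_cos_le_one _)
  · rw [hint]
    have hodd : ∫ y, kd y * Real.sin ⟪u, y⟫ = 0 := by
      have h1 := integral_neg_eq_self (fun y : V => kd y * Real.sin ⟪u, y⟫) volume
      simp only [hkev, inner_neg_right, Real.sin_neg, mul_neg] at h1
      rw [integral_neg] at h1
      linarith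
    have hsplit : ∀ y : V, kd y • Complex.exp (Complex.I * (⟪u, y⟫ : ℝ)) =
        ((kd y * Real.cos ⟪u, y⟫ : ℝ) : ℂ) + ((kd y * Real.sin ⟪u, y⟫ : ℝ) : ℂ) * Complex.I := by
      intro y
      rw [mul_comm Complex.I, Complex.exp_mul_I, Complex.real_smul]
      push_cast
      ring
    simp_rw [hsplit]
    rw [integral_add (hci u).ofReal ((hsi u).ofReal.mul_const _), integral_mul_const,
      integral_complex_ofReal, integral_complex_ofReal, hodd]
    simp
  · have h1 := integral_add_compl (μ := (volume : Measure V)) (s := Metric.closedBall (0 : V) 1)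
      (by measurability) (levy_integrable hα1 hα2 u)
    have h2 := Sfull_eq α (by linarith) e he u
    have h3 : ∫ y in (Metric.closedBall (0 : V) 1)ᶜ, (1 - Real.cos ⟪u, y⟫) / ‖y‖ ^ q =
        (∫ y, kd y) - ∫ y, kd y * Real.cos ⟪u, y⟫ := by
      rw [← integral_sub hki (hci u), ← integral_indicator (by measurability)]
      congr 1
      ext y
      by_cases hy : y ∈ (Metric.closedBall (0 : V) 1)ᶜ
      · simp only [kd]
        rw [Set.indicator_of_mem hy, Set.indicator_of_mem hy]
        ring
      · simp only [kd]
        rw [Set.indicator_of_notMem hy, Set.indicator_of_notMem hy]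
        ring
    unfold Sfull at h2
    rw [hκ]
    rw [h3, ← hq] at h1
    rw [← hq] at h2
    simp only [Sfull, ← hq] at h1 h2 ⊢
    linarith

end Levy

section OneDim

/-- Truncated subordinator exponent. -/
noncomputable def Phi (β ε l : ℝ) : ℝ :=
  ∫ s in Set.Ioi ε, (1 - Real.exp (-s * l)) * s ^ (-1 - β)

lemma one_sub_exp_nonneg {s l : ℝ} (hs : 0 ≤ s) (hl : 0 ≤ l) : 0 ≤ 1 - Real.exp (-s * l) := by
  have : Real.exp (-s * l) ≤ 1 := Real.exp_le_one_iff.2 (by nlinarith)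
  linarith

lemma Phi_integrable {β l : ℝ} (hβ0 : 0 < β) (hβ1 : β < 1) (hl : 0 ≤ l) :
    IntegrableOn (fun s => (1 - Real.exp (-s * l)) * s ^ (-1 - β)) (Set.Ioi 0) := by
  have hm : Measurable (fun s : ℝ => (1 - Real.exp (-s * l)) * s ^ (-1 - β)) := by fun_prop
  rw [← Set.Ioc_union_Ioi_eq_Ioi zero_le_one]
  refine IntegrableOn.union ?_ ?_
  · have h : IntegrableOn (fun r : ℝ => l * r ^ (-β)) (Set.Ioc 0 1) := by
      have := intervalIntegral.intervalIntegrable_rpow' (a := 0) (b := 1) (r := -β) (by linarith)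
      rw [intervalIntegrable_iff_integrableOn_Ioc_of_le zero_le_one] at this
      exact this.const_mul l
    refine Integrable.mono' h hm.aestronglyMeasurable ?_
    refine (ae_restrict_iff' measurableSet_Ioc).2 (Filter.Eventually.of_forall fun s hs => ?_)
    have hs0 : 0 < s := hs.1
    have h1 := one_sub_exp_nonneg hs0.le hl
    have h2 := Real.add_one_le_exp (-s * l)
    rw [Real.norm_eq_abs, abs_of_nonneg (by positivity)]
    calc _ ≤ (s * l) * s ^ (-1 - β) := by
          refine mul_le_mul_of_nonneg_right (by linarith) (by positivity)
      _ = l * (s ^ (1 : ℝ) * s ^ (-1 - β)) := by rw [Real.rpow_one]; ring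
      _ = l * s ^ (-β) := by
          rw [← Real.rpow_add hs0]
          congr 2
          ring
  · have h : IntegrableOn (fun r : ℝ => r ^ (-1 - β)) (Set.Ioi 1) :=
      integrableOn_Ioi_rpow_of_lt (by linarith) one_pos
    refine Integrable.mono' h hm.aestronglyMeasurable ?_
    refine (ae_restrict_iff' measurableSet_Ioi).2 (Filter.Eventually.of_forall fun s hs => ?_)
    have hs0 : 0 < s := lt_trans one_pos hs
    have h1 := one_sub_exp_nonneg hs0.le hl
    rw [Real.norm_eq_abs, abs_of_nonneg (by positivity)]
    refine mul_le_of_le_one_left (by positivity) ?_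
    linarith [Real.exp_pos (-s * l)]

lemma Phi_zero_eq {β l : ℝ} (hβ0 : 0 < β) (hl : 0 ≤ l) : Phi β 0 l = Phi β 0 1 * l ^ β := by
  rcases hl.eq_or_lt with rfl | hl
  · simp [Phi, Real.zero_rpow hβ0.ne']
  · have h := integral_comp_mul_left_Ioi (fun s => (1 - Real.exp (-s * 1)) * s ^ (-1 - β)) 0 hl
    have h2 : Phi β 0 l = l ^ (1 + β) *
        ∫ s in Set.Ioi (0 : ℝ), (fun s => (1 - Real.exp (-s * 1)) * s ^ (-1 - β)) (l * s) := by
      unfold Phi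
      rw [← integral_const_mul]
      refine setIntegral_congr_fun measurableSet_Ioi fun s hs => ?_
      have hs' : (0 : ℝ) < s := hs
      simp only
      rw [Real.mul_rpow hl.le hs'.le]
      have : l ^ (1 + β) * l ^ (-1 - β) = 1 := by
        rw [← Real.rpow_add hl]
        simp
      have e : -(l * s) * 1 = -s * l := by ring
      rw [e]
      linear_combination (-(1 - Real.exp (-s * l)) * s ^ (-1 - β)) * this
    rw [h2, h, mul_zero, smul_eq_mul, Real.rpow_add hl, Real.rpow_one]
    unfold Phi
    field_simp

lemma Phi_mono {β ε ε' l : ℝ} (hβ0 : 0 < β) (hβ1 : β < 1) (hl : 0 ≤ l) (h0 : 0 ≤ ε)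
    (h : ε ≤ ε') : Phi β ε' l ≤ Phi β ε l := by
  unfold Phi
  refine setIntegral_mono_set ((Phi_integrable hβ0 hβ1 hl).mono_set (Set.Ioi_subset_Ioi h0)) ?_
    (Set.Ioi_subset_Ioi h).eventuallyLE
  refine (ae_restrict_iff' measurableSet_Ioi).2 (Filter.Eventually.of_forall fun s hs => ?_)
  have hs0 : 0 < s := lt_of_le_of_lt h0 hs
  have h1 := one_sub_exp_nonneg hs0.le hl
  simp only [Pi.zero_apply]
  positivity

lemma Phi_lower {β l : ℝ} (hβ0 : 0 < β) (hβ1 : β < 1) (hl : 0 < l) :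
    (1 / 2) * l ^ β ≤ Phi β l⁻¹ l := by
  have hlp : 0 < l⁻¹ := by positivity
  have hi : IntegrableOn (fun r : ℝ => (1 / 2) * r ^ (-1 - β)) (Set.Ioi l⁻¹) :=
    (integrableOn_Ioi_rpow_of_lt (by linarith) hlp).const_mul _
  have h1 : ∫ s in Set.Ioi l⁻¹, (1 / 2) * s ^ (-1 - β) ≤ Phi β l⁻¹ l := by
    unfold Phi
    refine setIntegral_mono_on hi
      ((Phi_integrable hβ0 hβ1 hl.le).mono_set (Set.Ioi_subset_Ioi hlp.le)) measurableSet_Ioi ?_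
    intro s hs
    have hs1 : l⁻¹ < s := hs
    have hs0 : 0 < s := hlp.trans hs1
    have hsl : 1 ≤ s * l := by
      have := mul_le_mul_of_nonneg_right hs1.le hl.le
      rwa [inv_mul_cancel₀ hl.ne'] at this
    refine mul_le_mul_of_nonneg_right ?_ (by positivity)
    have h2 := Real.add_one_le_exp (s * l)
    have h3 : Real.exp (-s * l) ≤ 1 / 2 := by
      rw [neg_mul, Real.exp_neg, one_div]
      exact inv_anti₀ two_pos (by linarith)
    linarith
  refine le_trans ?_ h1
  rw [integral_const_mul, integral_Ioi_rpow_of_lt (by linarith) hlp]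
  refine mul_le_mul_of_nonneg_left ?_ (by norm_num)
  have e : -1 - β + 1 = -β := by ring
  rw [e, neg_div_neg_eq, Real.inv_rpow hl.le, Real.rpow_neg hl.le, inv_inv]
  rw [le_div_iff₀ hβ0]
  exact mul_le_of_le_one_right (by positivity) hβ1.le

lemma Phi_unif {β ε l : ℝ} (hβ0 : 0 < β) (hβ1 : β < 1) (hε : 0 < ε) (hl : 0 ≤ l) :
    (1 / 2) * l ^ β ≤ ε ^ (1 - β) * l + Phi β ε l := by
  have hnn : 0 ≤ Phi β ε l := by
    refine setIntegral_nonneg measurableSet_Ioi fun s hs => ?_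
    have hs0 : 0 < s := hε.trans hs
    have h1 := one_sub_exp_nonneg hs0.le hl
    positivity
  rcases hl.eq_or_lt with rfl | hl
  · rw [Real.zero_rpow hβ0.ne']
    simpa using hnn
  by_cases h : ε ≤ l⁻¹
  · have h1 := Phi_mono hβ0 hβ1 hl.le hε.le h
    have h2 := Phi_lower hβ0 hβ1 hl
    have h3 : 0 ≤ ε ^ (1 - β) * l := by positivity
    linarith
  · push Not at h
    have h1 : l⁻¹ ^ (1 - β) ≤ ε ^ (1 - β) :=
      Real.rpow_le_rpow (by positivity) h.le (by linarith)
    have h2 : l⁻¹ ^ (1 - β) * l = l ^ β := by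
      rw [Real.inv_rpow hl.le, ← Real.rpow_neg hl.le]
      nth_rewrite 2 [← Real.rpow_one l]
      rw [← Real.rpow_add hl]
      congr 1
      ring
    have h3 : l⁻¹ ^ (1 - β) * l ≤ ε ^ (1 - β) * l := mul_le_mul_of_nonneg_right h1 hl.le
    have h4 : 0 ≤ l ^ β := by positivity
    linarith

lemma Phi_one_pos {β : ℝ} (hβ0 : 0 < β) (hβ1 : β < 1) : 0 < Phi β 0 1 := by
  have h1 := Phi_lower hβ0 hβ1 one_pos
  have h2 := Phi_mono hβ0 hβ1 zero_le_one le_rfl (inv_nonneg.2 (zero_le_one (α := ℝ)))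
  rw [Real.one_rpow] at h1
  linarith

lemma Phi_tendsto {β l : ℝ} (hβ0 : 0 < β) (hβ1 : β < 1) (hl : 0 ≤ l) :
    Filter.Tendsto (fun n : ℕ => Phi β (1 / ((n : ℝ) + 1)) l) Filter.atTop (nhds (Phi β 0 l)) := by
  have hU : (⋃ n : ℕ, Set.Ioi (1 / ((n : ℝ) + 1))) = Set.Ioi 0 := by
    ext s
    simp only [Set.mem_iUnion, Set.mem_Ioi]
    constructor
    · rintro ⟨n, hn⟩
      exact lt_trans (by positivity) hn
    · intro hs
      exact exists_nat_one_div_lt hs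
  have h := tendsto_setIntegral_of_monotone (μ := volume)
    (f := fun s => (1 - Real.exp (-s * l)) * s ^ (-1 - β))
    (s := fun n : ℕ => Set.Ioi (1 / ((n : ℝ) + 1))) (fun _ => measurableSet_Ioi)
    (fun m n hmn => Set.Ioi_subset_Ioi (Nat.one_div_le_one_div hmn))
    (by rw [hU]; exact Phi_integrable hβ0 hβ1 hl)
  rw [hU] at h
  exact h

open scoped NNReal in
lemma exists_omega {β ε K : ℝ} (hβ0 : 0 < β) (hβ1 : β < 1) (hε : 0 < ε) (hK : 0 ≤ K) :
    ∃ ω : Measure ℝ≥0, IsFiniteMeasure ω ∧ ∃ L : ℝ, ∀ l, 0 ≤ l →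
      ∫ s : ℝ≥0, Real.exp (-(s : ℝ) * l) ∂ω = L - K * Phi β ε l := by
  have hi0 : IntegrableOn (fun s : ℝ => s ^ (-1 - β)) (Set.Ioi ε) :=
    integrableOn_Ioi_rpow_of_lt (by linarith) hε
  have hi : Integrable (fun s : ℝ => K * s ^ (-1 - β)) (volume.restrict (Set.Ioi ε)) :=
    hi0.const_mul K
  obtain ⟨hfin, hint⟩ := wd_aux (volume.restrict (Set.Ioi ε)) (fun s : ℝ => K * s ^ (-1 - β))
    (by fun_prop) hi ((ae_restrict_iff' measurableSet_Ioi).2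
      (Filter.Eventually.of_forall fun s hs => by
        have hs0 : 0 < s := hε.trans hs
        positivity))
  set m := (volume.restrict (Set.Ioi ε)).withDensity
    (fun s : ℝ => ENNReal.ofReal (K * s ^ (-1 - β)))
  refine ⟨m.map Real.toNNReal, inferInstance, K * ∫ s in Set.Ioi ε, s ^ (-1 - β), fun l hl => ?_⟩
  rw [integral_map (by fun_prop) (Measurable.aestronglyMeasurable (by fun_prop)), hint]
  unfold Phi
  rw [← integral_const_mul, ← integral_const_mul, ← integral_sub hi]
  · refine setIntegral_congr_fun measurableSet_Ioi fun s hs => ?_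
    have hs0 : 0 < s := hε.trans hs
    simp only [smul_eq_mul]
    rw [Real.coe_toNNReal _ hs0.le]
    ring
  · exact ((Phi_integrable hβ0 hβ1 hl).mono_set (Set.Ioi_subset_Ioi hε.le)).const_mul K

lemma final_integral {β B : ℝ} (hβ0 : 0 < β) (hB : 0 < B) :
    ∃ J : ℝ, 0 ≤ J ∧ ∀ t : ℝ, 0 < t → ∫⁻ l in Set.Ioi (0 : ℝ),
      ENNReal.ofReal (Real.exp (-(t * B) * l ^ β)) = ENNReal.ofReal (J * t ^ (-(1 / β))) := by
  refine ⟨∫ l in Set.Ioi (0 : ℝ), Real.exp (-B * l ^ β), integral_nonneg fun _ => by positivity,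
    fun t ht => ?_⟩
  have hi : IntegrableOn (fun l : ℝ => Real.exp (-(t * B) * l ^ β)) (Set.Ioi 0) := by
    have := integrableOn_rpow_mul_exp_neg_mul_rpow (s := 0) (p := β) (b := t * B) (by norm_num) hβ0
      (by positivity)
    simpa using this
  rw [← ofReal_integral_eq_lintegral_ofReal hi (Filter.Eventually.of_forall fun _ => by positivity)]
  congr 1
  have htp : 0 < t ^ (1 / β) := by positivity
  have h := integral_comp_mul_left_Ioi (fun l => Real.exp (-B * l ^ β)) 0 htp
  rw [mul_zero, smul_eq_mul] at h
  rw [Real.rpow_neg ht.le, mul_comm (∫ l in Set.Ioi (0 : ℝ), Real.exp (-B * l ^ β)), ← h]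
  refine setIntegral_congr_fun measurableSet_Ioi fun l hl => ?_
  have hl0 : (0 : ℝ) < l := hl
  rw [Real.mul_rpow htp.le hl0.le, ← Real.rpow_mul ht.le, one_div_mul_cancel hβ0.ne', Real.rpow_one]
  congr 1
  ring

end OneDim

section Main

variable {V : Type*} [NormedAddCommGroup V] [InnerProductSpace ℝ V] [FiniteDimensional ℝ V]
  [MeasurableSpace V] [BorelSpace V]

/-- The approximating exponent. -/
noncomputable def expo (β c t κ : ℝ) (r : V → ℝ) (ε : ℝ) (u : V) : ℝ :=
  -(t * c * ε ^ (1 - β)) * ‖u‖ ^ 2 - t * c * Phi β ε (‖u‖ ^ 2) + t * κ - t * r u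

lemma approx_bound [Nontrivial V] {β c t ε : ℝ} (hβ0 : 0 < β) (hβ1 : β < 1) (hc : 0 < c)
    (ht : 0 < t) (hε : 0 < ε) (k : Measure V) [IsFiniteMeasure k] (r : V → ℝ)
    (hr : ∀ u, ∫ y, Complex.exp (Complex.I * (⟪u, y⟫ : ℝ)) ∂k = (r u : ℂ))
    (a b : V) (ha : ‖a‖ ≤ 1) (hb : ‖b‖ ≤ 1) :
    ∫⁻ x, ‖FI (fun u => ((⟪a, u⟫ * ⟪b, u⟫ : ℝ) : ℂ) *
        ((Real.exp (expo β c t (k.real Set.univ) r ε u) : ℝ) : ℂ)) x‖ₑ ≤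
      ENNReal.ofReal (Real.exp (2 * t * k.real Set.univ) * ∫ z, Bprof V z) *
        ∫⁻ l in Set.Ioi (0 : ℝ), ENNReal.ofReal (Real.exp (-(t * (c / 2)) * l ^ β)) := by
  set κ := k.real Set.univ with hκ
  have hδ : 0 < t * c * ε ^ (1 - β) := by positivity
  obtain ⟨ω, hω, L, hL⟩ := exists_omega hβ0 hβ1 hε (K := t * c) (by positivity)
  haveI : IsFiniteMeasure (ENNReal.ofReal t • k) :=
    Measure.smul_finite k ENNReal.ofReal_ne_top
  obtain ⟨M, hM, h1, h2⟩ := exists_M ω (ENNReal.ofReal t • k)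
  have hQ : ∀ u : V, ∫ g, chi u g ∂M =
      ((Real.exp (L - t * c * Phi β ε (‖u‖ ^ 2) - t * r u) : ℝ) : ℂ) := by
    intro u
    rw [h1 u, integral_complex_ofReal, hL _ (by positivity), integral_smul_measure, hr,
      ENNReal.toReal_ofReal ht.le]
    push_cast
    simp
  have hmass : ∀ l : ℝ, 0 ≤ l → ∫ g, Real.exp (-(g.1 : ℝ) * l) ∂M =
      Real.exp (L - t * c * Phi β ε l + t * κ) := by
    intro l hl
    rw [h2 l hl, hL l hl, measureReal_ennreal_smul_apply, ENNReal.toReal_ofReal ht.le]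
  have hcore := core_bound M hδ a b ha hb
  have hfac : ∀ x, FI (fun u => ((⟪a, u⟫ * ⟪b, u⟫ : ℝ) : ℂ) *
        ((Real.exp (expo β c t κ r ε u) : ℝ) : ℂ)) x =
      ((Real.exp (t * κ - L) : ℝ) : ℂ) * FI (fun u => ((⟪a, u⟫ * ⟪b, u⟫ : ℝ) : ℂ) *
        (((Real.exp (-(t * c * ε ^ (1 - β)) * ‖u‖ ^ 2) : ℝ) : ℂ) * ∫ g, chi u g ∂M)) x := by
    intro x
    unfold FI
    rw [← integral_const_mul]
    congr 1
    ext u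
    beta_reduce
    rw [hQ u]
    have : expo β c t κ r ε u = (t * κ - L) + (-(t * c * ε ^ (1 - β)) * ‖u‖ ^ 2 +
      (L - t * c * Phi β ε (‖u‖ ^ 2) - t * r u)) := by
      unfold expo
      ring
    rw [this, Real.exp_add, Real.exp_add]
    simp only [Complex.ofReal_mul]
    ring
  have hBnn : 0 ≤ ∫ z, Bprof V z := integral_nonneg Bprof_nonneg
  calc _ = ENNReal.ofReal (Real.exp (t * κ - L)) * ∫⁻ x, ‖FI (fun u =>
        ((⟪a, u⟫ * ⟪b, u⟫ : ℝ) : ℂ) *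
        (((Real.exp (-(t * c * ε ^ (1 - β)) * ‖u‖ ^ 2) : ℝ) : ℂ) * ∫ g, chi u g ∂M)) x‖ₑ := by
        rw [← lintegral_const_mul' _ _ ENNReal.ofReal_ne_top]
        congr 1
        ext x
        rw [hfac x, enorm_mul]
        congr 1
        rw [← ofReal_norm, Complex.norm_real, Real.norm_eq_abs, Real.abs_exp]
    _ ≤ ENNReal.ofReal (Real.exp (t * κ - L)) * (ENNReal.ofReal (∫ z, Bprof V z) *
        ∫⁻ l in Set.Ioi (0 : ℝ), ENNReal.ofReal (Real.exp (-(t * c * ε ^ (1 - β)) * l) *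
          ∫ g, Real.exp (-(g.1 : ℝ) * l) ∂M)) := by gcongr
    _ ≤ ENNReal.ofReal (Real.exp (t * κ - L)) * (ENNReal.ofReal (∫ z, Bprof V z) *
        ∫⁻ l in Set.Ioi (0 : ℝ), ENNReal.ofReal (Real.exp (L + t * κ)) *
          ENNReal.ofReal (Real.exp (-(t * (c / 2)) * l ^ β))) := by
        refine mul_le_mul_right (mul_le_mul_right ?_ _) _
        refine setLIntegral_mono' measurableSet_Ioi fun l hl => ?_
        have hl' : (0 : ℝ) < l := hl
        rw [hmass l hl'.le, ← ENNReal.ofReal_mul (by positivity), ← Real.exp_add, ← Real.exp_add]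
        refine ENNReal.ofReal_le_ofReal (Real.exp_le_exp.2 ?_)
        have h3 := Phi_unif hβ0 hβ1 hε hl'.le
        have h4 : t * c * (1 / 2 * l ^ β) ≤ t * c * (ε ^ (1 - β) * l + Phi β ε l) := by gcongr
        linarith
    _ = _ := by
        rw [lintegral_const_mul' _ _ ENNReal.ofReal_ne_top, ← mul_assoc, ← mul_assoc,
          ← ENNReal.ofReal_mul (by positivity), ← ENNReal.ofReal_mul (by positivity)]
        congr 2
        have : Real.exp (2 * t * κ) = Real.exp (t * κ - L) * Real.exp (L + t * κ) := by
          rw [← Real.exp_add]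
          congr 1
          ring
        rw [this]
        ring

lemma Phi_meas (β ε : ℝ) : Measurable (Phi β ε) := by
  unfold Phi
  refine StronglyMeasurable.measurable ?_
  refine StronglyMeasurable.integral_prod_right' (ν := volume.restrict (Set.Ioi ε))
    (f := fun p : ℝ × ℝ => (1 - Real.exp (-p.2 * p.1)) * p.2 ^ (-1 - β)) ?_
  exact Measurable.stronglyMeasurable (by fun_prop)

lemma limit_bound [Nontrivial V] {β c t : ℝ} (hβ0 : 0 < β) (hβ1 : β < 1) (hc : 0 < c)
    (ht : 0 < t) (k : Measure V) [IsFiniteMeasure k] (r : V → ℝ) (hrm : Measurable r)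
    (hrb : ∀ u, |r u| ≤ k.real Set.univ)
    (hr : ∀ u, ∫ y, Complex.exp (Complex.I * (⟪u, y⟫ : ℝ)) ∂k = (r u : ℂ))
    (a b : V) (ha : ‖a‖ ≤ 1) (hb : ‖b‖ ≤ 1) :
    ∫⁻ x, ‖FI (fun u => ((⟪a, u⟫ * ⟪b, u⟫ : ℝ) : ℂ) *
        ((Real.exp (-t * (c * Phi β 0 (‖u‖ ^ 2) - k.real Set.univ + r u)) : ℝ) : ℂ)) x‖ₑ ≤
      ENNReal.ofReal (Real.exp (2 * t * k.real Set.univ) * ∫ z, Bprof V z) *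
        ∫⁻ l in Set.Ioi (0 : ℝ), ENNReal.ofReal (Real.exp (-(t * (c / 2)) * l ^ β)) := by
  set κ := k.real Set.univ with hκ
  let e : ℕ → ℝ := fun n => 1 / ((n : ℝ) + 1)
  have hepos : ∀ n, 0 < e n := fun n => by simp only [e]; positivity
  have helim : Filter.Tendsto e Filter.atTop (nhds 0) := tendsto_one_div_add_atTop_nhds_zero_nat
  let G : ℕ → V → ℂ := fun n u => ((⟪a, u⟫ * ⟪b, u⟫ : ℝ) : ℂ) *
        ((Real.exp (expo β c t κ r (e n) u) : ℝ) : ℂ)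
  have hGm : ∀ n, Measurable (G n) := by
    intro n
    have hP : Measurable (fun u : V => Phi β (e n) (‖u‖ ^ 2)) := (Phi_meas β _).comp (by fun_prop)
    simp only [G, expo]
    fun_prop
  have hbd : ∀ n u, ‖G n u‖ ≤ Real.exp (2 * t * κ) *
      (‖u‖ ^ 2 * Real.exp (-(t * (c / 2)) * ‖u‖ ^ (2 * β))) := by
    intro n u
    simp only [G]
    rw [norm_mul, Complex.norm_real, Complex.norm_real, Real.norm_eq_abs, Real.norm_eq_abs,
      Real.abs_exp, abs_mul]
    have h1 : |⟪a, u⟫| ≤ ‖u‖ :=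
      (abs_real_inner_le_norm a u).trans (by nlinarith [norm_nonneg u])
    have h2 : |⟪b, u⟫| ≤ ‖u‖ :=
      (abs_real_inner_le_norm b u).trans (by nlinarith [norm_nonneg u])
    have h3 : Real.exp (expo β c t κ r (e n) u) ≤
        Real.exp (2 * t * κ) * Real.exp (-(t * (c / 2)) * ‖u‖ ^ (2 * β)) := by
      rw [← Real.exp_add]
      refine Real.exp_le_exp.2 ?_
      have h4 := Phi_unif hβ0 hβ1 (hepos n) (l := ‖u‖ ^ 2) (by positivity)
      have h5 : (‖u‖ ^ 2) ^ β = ‖u‖ ^ (2 * β) := by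
        rw [← Real.rpow_natCast, ← Real.rpow_mul (norm_nonneg u)]
        norm_num
      have h6 := mul_le_mul_of_nonneg_left h4 (by positivity : 0 ≤ t * c)
      have h7 : -(t * r u) ≤ t * κ := by
        have := (abs_le.1 (hrb u)).1
        nlinarith
      rw [h5] at h6
      unfold expo
      linarith
    calc _ ≤ (‖u‖ * ‖u‖) * (Real.exp (2 * t * κ) * Real.exp (-(t * (c / 2)) * ‖u‖ ^ (2 * β))) := by
          gcongr
      _ = _ := by ring
  have hbi : Integrable (fun u : V => Real.exp (2 * t * κ) *
      (‖u‖ ^ 2 * Real.exp (-(t * (c / 2)) * ‖u‖ ^ (2 * β)))) :=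
    (integrable_pow_exp 2 (by positivity) (by positivity)).const_mul _
  have hlim : ∀ u, Filter.Tendsto (fun n => G n u) Filter.atTop
      (nhds (((⟪a, u⟫ * ⟪b, u⟫ : ℝ) : ℂ) *
        ((Real.exp (-t * (c * Phi β 0 (‖u‖ ^ 2) - κ + r u)) : ℝ) : ℂ))) := by
    intro u
    refine Filter.Tendsto.const_mul _ ?_
    refine (Complex.continuous_ofReal.tendsto _).comp ((Real.continuous_exp.tendsto _).comp ?_)
    have h1 := Phi_tendsto hβ0 hβ1 (l := ‖u‖ ^ 2) (by positivity)
    have h2 : Filter.Tendsto (fun n => e n ^ (1 - β)) Filter.atTop (nhds 0) := by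
      have := helim.rpow_const (p := 1 - β) (Or.inr (by linarith))
      rwa [Real.zero_rpow (by linarith)] at this
    have h3 := ((((h2.const_mul (t * c)).neg.mul_const (‖u‖ ^ 2)).sub
      (h1.const_mul (t * c))).add_const (t * κ)).sub_const (t * r u)
    unfold expo
    convert h3 using 2
    ring
  have hFlim : ∀ x, Filter.Tendsto (fun n => FI (G n) x) Filter.atTop
      (nhds (FI (fun u => ((⟪a, u⟫ * ⟪b, u⟫ : ℝ) : ℂ) *
        ((Real.exp (-t * (c * Phi β 0 (‖u‖ ^ 2) - κ + r u)) : ℝ) : ℂ)) x)) := by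
    intro x
    unfold FI
    refine tendsto_integral_of_dominated_convergence _ (fun n => ?_) hbi (fun n => ?_) ?_
    · have := hGm n
      exact Measurable.aestronglyMeasurable (by fun_prop)
    · refine Filter.Eventually.of_forall fun u => ?_
      rw [norm_mul, norm_expI, one_mul]
      exact hbd n u
    · exact Filter.Eventually.of_forall fun u => (hlim u).const_mul _
  have hFm : ∀ n, Measurable (fun x => ‖FI (G n) x‖ₑ) := by
    intro n
    refine Measurable.enorm ?_
    unfold FI
    refine StronglyMeasurable.measurable ?_
    refine StronglyMeasurable.integral_prod_right' (ν := (volume : Measure V))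
      (f := fun p : V × V => Complex.exp (Complex.I * (⟪p.1, p.2⟫ : ℝ)) * G n p.2) ?_
    have := hGm n
    exact Measurable.stronglyMeasurable (by fun_prop)
  calc _ = ∫⁻ x, Filter.liminf (fun n => ‖FI (G n) x‖ₑ) Filter.atTop := by
        congr 1
        ext x
        exact (((continuous_enorm.tendsto _).comp (hFlim x)).liminf_eq).symm
    _ ≤ Filter.liminf (fun n => ∫⁻ x, ‖FI (G n) x‖ₑ) Filter.atTop := lintegral_liminf_le hFm
    _ ≤ Filter.liminf (fun _ : ℕ => ENNReal.ofReal (Real.exp (2 * t * κ) * ∫ z, Bprof V z) *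
        ∫⁻ l in Set.Ioi (0 : ℝ), ENNReal.ofReal (Real.exp (-(t * (c / 2)) * l ^ β)))
          Filter.atTop := by
        refine Filter.liminf_le_liminf (Filter.Eventually.of_forall fun n => ?_)
        exact approx_bound hβ0 hβ1 hc ht (hepos n) k r hr a b ha hb
    _ = _ := Filter.liminf_const _

end Main


section Final

variable {V : Type*} [NormedAddCommGroup V] [InnerProductSpace ℝ V] [FiniteDimensional ℝ V]
  [MeasurableSpace V] [BorelSpace V]

lemma FI_meas (g : V → ℂ) (hg : Measurable g) : Measurable (FI g) := by
  unfold FI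
  refine StronglyMeasurable.measurable ?_
  refine StronglyMeasurable.integral_prod_right' (ν := (volume : Measure V))
    (f := fun p : V × V => Complex.exp (Complex.I * (⟪p.1, p.2⟫ : ℝ)) * g p.2) ?_
  exact Measurable.stronglyMeasurable (by fun_prop)

lemma re_FI (m : V → ℝ) (hm : Integrable m) (x : V) :
    (FI (fun u => (m u : ℂ)) x).re = ∫ u, Real.cos ⟪x, u⟫ * m u := by
  unfold FI
  have hi : Integrable (fun u : V => Complex.exp (Complex.I * (⟪x, u⟫ : ℝ)) * (m u : ℂ)) := by
    refine hm.ofReal.bdd_mul (c := 1) (Continuous.aestronglyMeasurable (by fun_prop)) ?_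
    exact Filter.Eventually.of_forall fun u => by rw [norm_expI]
  have h := Complex.reCLM.integral_comp_comm hi
  simp only [Complex.reCLM_apply] at h
  rw [← h]
  congr 1
  ext u
  rw [mul_comm Complex.I, Complex.re_mul_ofReal, Complex.exp_ofReal_mul_I_re]

end Final

/-- The transition density `p_t` is `C²`, its second partial derivatives are integrable,
and `‖∂²p_t/∂x_i∂x_j‖_{L¹} ≤ C t^{-2/α}` uniformly for `0 < t ≤ T`. -/
theorem stmt_6 (d : ℕ) (hd : 2 ≤ d) (α T : ℝ) (hα1 : 1 < α) (hα2 : α < 2) (hT : 0 < T) :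
    (∀ t : ℝ, 0 < t → t ≤ T → ContDiff ℝ 2 (pdens d α t)) ∧
    ∃ C : ℝ, ∀ t : ℝ, 0 < t → t ≤ T → ∀ i j : Fin d,
      Integrable (fun x : EuclideanSpace ℝ (Fin d) =>
        fderiv ℝ (fun z => fderiv ℝ (pdens d α t) z (EuclideanSpace.single i 1)) x
          (EuclideanSpace.single j 1)) ∧
      (∫ x : EuclideanSpace ℝ (Fin d),
          |fderiv ℝ (fun z => fderiv ℝ (pdens d α t) z (EuclideanSpace.single i 1)) x
            (EuclideanSpace.single j 1)|) ≤
        C * t ^ (-(2 / α)) := by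
  have : Nonempty (Fin d) := ⟨⟨0, by omega⟩⟩
  have : Nontrivial (EuclideanSpace ℝ (Fin d)) := inferInstance
  obtain ⟨k, hk, A, hA, r, hrm, hkr⟩ := exists_k (V := EuclideanSpace ℝ (Fin d)) hα1 hα2
  set κ := k.real Set.univ with hκ
  have hβ0 : 0 < α / 2 := by linarith
  have hβ1 : α / 2 < 1 := by linarith
  have hP1 := Phi_one_pos hβ0 hβ1
  set c := A / Phi (α / 2) 0 1 with hc
  have hc0 : 0 < c := by positivity
  have hPsi : ∀ u, Psi d α u = A * ‖u‖ ^ α - κ + r u := by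
    intro u
    have := (hkr u).2.2
    rw [finrank_euclideanSpace_fin] at this
    exact this
  have hcP : ∀ u : EuclideanSpace ℝ (Fin d),
      A * ‖u‖ ^ α = c * Phi (α / 2) 0 (‖u‖ ^ 2) := by
    intro u
    rw [Phi_zero_eq hβ0 (by positivity), hc]
    have h5 : (‖u‖ ^ 2) ^ (α / 2) = ‖u‖ ^ α := by
      rw [← Real.rpow_natCast, ← Real.rpow_mul (norm_nonneg u)]
      congr 1
      push_cast
      ring
    rw [h5]
    field_simp
  have hPsim : Measurable (Psi d α) := by
    have : Psi d α = fun u => A * ‖u‖ ^ α - κ + r u := funext hPsi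
    rw [this]
    fun_prop
  let m : ℝ → EuclideanSpace ℝ (Fin d) → ℝ := fun t u => Real.exp (-t * Psi d α u)
  have hmm : ∀ t, Measurable (m t) := by
    intro t
    simp only [m]
    fun_prop
  have hmi : ∀ t, 0 < t → ∀ n : ℕ,
      Integrable (fun u : EuclideanSpace ℝ (Fin d) => ‖u‖ ^ n * ‖((m t u : ℝ) : ℂ)‖) := by
    intro t ht n
    have hb := (integrable_pow_exp (V := EuclideanSpace ℝ (Fin d)) n (p := α) (b := t * A)
      (by linarith) (by positivity)).const_mul (Real.exp (2 * t * κ))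
    refine hb.mono' ?_ (Filter.Eventually.of_forall fun u => ?_)
    · have := hmm t
      exact Measurable.aestronglyMeasurable (by fun_prop)
    · rw [Real.norm_of_nonneg (by positivity), Complex.norm_real, Real.norm_eq_abs]
      simp only [m]
      rw [Real.abs_exp, mul_left_comm, ← Real.exp_add]
      refine mul_le_mul_of_nonneg_left (Real.exp_le_exp.2 ?_) (by positivity)
      rw [hPsi]
      have := (abs_le.1 (hkr u).1).1
      nlinarith
  have hpd : ∀ t, 0 < t → pdens d α t =
      fun x => (((2 * Real.pi) ^ d)⁻¹ • Complex.reCLM) (FI (fun u => ((m t u : ℝ) : ℂ)) x) := by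
    intro t ht
    ext x
    have hint : Integrable (m t) := by
      have h := hmi t ht 0
      refine h.mono' (hmm t).aestronglyMeasurable (Filter.Eventually.of_forall fun u => ?_)
      rw [pow_zero, one_mul, Complex.norm_real]
    simp only [_root_.smul_apply, Complex.reCLM_apply, smul_eq_mul]
    rw [re_FI (m t) hint]
    rfl
  have hC2 : ∀ t, 0 < t → ContDiff ℝ 2 (FI (fun u => ((m t u : ℝ) : ℂ))) :=
    fun t ht => FI_contDiff _ (hmi t ht)
  obtain ⟨J, hJ0, hJ⟩ := final_integral hβ0 (B := c / 2) (by positivity)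
  have hB0 : 0 ≤ ∫ z, Bprof (EuclideanSpace ℝ (Fin d)) z := integral_nonneg Bprof_nonneg
  have hκ0 : 0 ≤ κ := measureReal_nonneg
  have hpi : 0 < ((2 * Real.pi) ^ d)⁻¹ := by positivity
  set q := ((2 * Real.pi) ^ d)⁻¹ with hq
  refine ⟨fun t ht _ => ?_, q * (Real.exp (2 * T * κ) *
    (∫ z, Bprof (EuclideanSpace ℝ (Fin d)) z) * J), fun t ht htT i j => ?_⟩
  · rw [hpd t ht]
    exact (q • Complex.reCLM).contDiff.comp (hC2 t ht)
  set a : EuclideanSpace ℝ (Fin d) := EuclideanSpace.single i 1 with ha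
  set b : EuclideanSpace ℝ (Fin d) := EuclideanSpace.single j 1 with hb
  have ha1 : ‖a‖ ≤ 1 := by simp [ha]
  have hb1 : ‖b‖ ≤ 1 := by simp [hb]
  set F := FI (fun u : EuclideanSpace ℝ (Fin d) =>
    ((⟪a, u⟫ * ⟪b, u⟫ : ℝ) : ℂ) * ((m t u : ℝ) : ℂ)) with hF
  have hder : ∀ x, fderiv ℝ (fun z => fderiv ℝ (pdens d α t) z a) x b = -(q * (F x).re) := by
    intro x
    have hd1 : ∀ z, fderiv ℝ (pdens d α t) z a =
        (q • Complex.reCLM) (fderiv ℝ (FI (fun u => ((m t u : ℝ) : ℂ))) z a) := by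
      intro z
      rw [hpd t ht]
      have := ((q • Complex.reCLM).hasFDerivAt.comp z
        ((hC2 t ht).differentiable (by norm_num) z).hasFDerivAt).fderiv
      have h2 := congrArg (fun L => L a) this
      exact h2
    have hdiff : Differentiable ℝ
        (fun z => fderiv ℝ (FI (fun u => ((m t u : ℝ) : ℂ))) z a) := by
      have h1 : ContDiff ℝ 1 (fderiv ℝ (FI (fun u => ((m t u : ℝ) : ℂ)))) :=
        (hC2 t ht).fderiv_right (by norm_num)
      exact (h1.differentiable (by norm_num)).clm_apply (differentiable_const a)
    have hd2 : (fun z => fderiv ℝ (pdens d α t) z a) = fun z =>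
        (q • Complex.reCLM) (fderiv ℝ (FI (fun u => ((m t u : ℝ) : ℂ))) z a) := funext hd1
    rw [hd2]
    have := ((q • Complex.reCLM).hasFDerivAt.comp x (hdiff x).hasFDerivAt).fderiv
    have h2 := congrArg (fun L => L b) this
    refine h2.trans ?_
    have hmt := hmm t
    rw [ContinuousLinearMap.comp_apply, FI_fderiv2 _
      (Measurable.aestronglyMeasurable (by fun_prop)) (hmi t ht)]
    simp [hF]
  have hbound : ∫⁻ x, ‖F x‖ₑ ≤ ENNReal.ofReal
      (Real.exp (2 * t * κ) * (∫ z, Bprof (EuclideanSpace ℝ (Fin d)) z) *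
        (J * t ^ (-(2 / α)))) := by
    have h := limit_bound hβ0 hβ1 hc0 ht k r hrm (fun u => (hkr u).1) (fun u => (hkr u).2.1)
      a b ha1 hb1
    rw [hJ t ht, ← ENNReal.ofReal_mul (by positivity), one_div_div] at h
    refine le_trans (le_of_eq ?_) h
    simp only [hF, m, hPsi, hcP, hκ]
  have hFm : Measurable F := by
    have hmt := hmm t
    exact FI_meas _ (by fun_prop)
  have hFi : Integrable F :=
    ⟨hFm.aestronglyMeasurable, lt_of_le_of_lt hbound ENNReal.ofReal_lt_top⟩
  have hfun : (fun x => fderiv ℝ (fun z => fderiv ℝ (pdens d α t) z a) x b) =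
      fun x => -(q * (F x).re) := funext hder
  have hI : Integrable (fun x => -(q * (F x).re)) := (hFi.re.const_mul q).neg
  refine ⟨by rw [hfun]; exact hI, ?_⟩
  simp only [hder]
  calc ∫ x, |-(q * (F x).re)| ≤ ∫ x, q * ‖F x‖ := by
        refine integral_mono hI.abs (hFi.norm.const_mul q) fun x => ?_
        simp only [abs_neg, abs_mul, abs_of_pos hpi]
        gcongr
        exact Complex.abs_re_le_norm _
    _ = q * ∫ x, ‖F x‖ := integral_const_mul _ _
    _ ≤ q * (Real.exp (2 * t * κ) * (∫ z, Bprof (EuclideanSpace ℝ (Fin d)) z) *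
        (J * t ^ (-(2 / α)))) := by
        gcongr
        rw [integral_norm_eq_lintegral_enorm hFm.aestronglyMeasurable]
        exact ENNReal.toReal_le_of_le_ofReal (by positivity) hbound
    _ ≤ q * (Real.exp (2 * T * κ) * (∫ z, Bprof (EuclideanSpace ℝ (Fin d)) z) *
        (J * t ^ (-(2 / α)))) := by gcongr
    _ = _ := by ring
end
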